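/- There is a constant C > 0 such that for every probability space (X, ℬ, μ) with a measurable, measure-preserving transformation T : X → X and every measurable set A ∈ ℬ with μ(A) > 0, one has sup_{λ>0} λ · μ{x ∈ X : sup_{N ≥ 2} 𝒜_N(𝟙_A)(x) > λ} ≤ C μ(A) log²(e/μ(A)). -/

import Mathlib

open MeasureTheory Filter
open scoped BigOperators

universe u

/-- The set of primes `p ≤ N`. -/
def primesUpTo (N : ℕ) : Finset ℕ := (Finset.range (N + 1)).filter Nat.Prime

/-- The ergodic average `𝒜_N f(x) = (1/π(N)) Σ_{p ∈ ℙ_N} f(T^p x)`. -/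
noncomputable def ergAvg {X : Type u} (T : X → X) (f : X → ℝ) (N : ℕ) (x : X) : ℝ :=
  ((primesUpTo N).card : ℝ)⁻¹ * ∑ p ∈ primesUpTo N, f (T^[p] x)

/-!
For `N < 2 ^ n ≤ 2 N`, the primes up to `N` are majorised by a product `ν κ` of sieve weights with
mean value close to `1`: `ν` removes exactly the multiples of the primes in `(w, u]`, where
`w = 256 ^ j₀` with `2 ^ (-j₀) ≤ μ(A)` and `u = 256 ^ j` with `512 ^ j ≤ n < 512 ^ (j + 1)`, and `κ`
is the Selberg weight for the primes in `(u, 2 ^ (n / 64)]`. Each prime `p > 2 ^ (n / 64)` satisfies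
`n ≲ V ν(p) κ(p)`, where the product `V` of `p / (p - 1)` over the primes `p ≤ w` is `O(j₀ ^ 2)`;
this is the factor `log² (e / μ(A))`.

Telescoping `ν` over the levels `256 ^ i` writes `ν κ` as `1` plus increments plus the error
`ν (κ - 1)`. The constant `1` is handled by the maximal ergodic theorem. An increment is periodic,
so its averages are dominated by Birkhoff averages of its average over one period. The error is
handled by Chebyshev's inequality in `L²` and a union bound over the scales `n`.

Both the increments and the error expand in Ramanujan sums whose moduli exceed a power of the level.
For such a weight, van der Corput's inequality bounds the second moment of the weighted average by a
quadrilinear form in the correlations of `𝟙_A`, where periodicity cancels the terms with distinct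
moduli. Rankin's trick applied to the remaining sum of `65536 ^ ω(q) / q ^ 4` over `q ≥ 4 ^ (4 j)`
gains `4 ^ (-5 j) = 1024 ^ (-j)`, which beats the number `512 ^ (j + 1)` of scales `n`.
-/

namespace ErgodicPrimes

open Finset

/-! ### Products over primes and Selberg's sum -/

/-- The set of primes in `(a, b]`. -/
def primesIoc (a b : ℕ) : Finset ℕ := {p ∈ Ioc a b | p.Prime}

lemma mem_primesIoc {a b p : ℕ} : p ∈ primesIoc a b ↔ (a < p ∧ p ≤ b) ∧ p.Prime := by
  simp [primesIoc]

lemma prime_of_subset_primesIoc {a b : ℕ} {S : Finset ℕ} (h : S ⊆ primesIoc a b) :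
    ∀ p ∈ S, p.Prime :=
  fun _ hp => (mem_primesIoc.1 (h hp)).2

lemma prod_primesIoc_consecutive {M : Type*} [CommMonoid M] (g : ℕ → M) {a b c : ℕ}
    (hab : a ≤ b) (hbc : b ≤ c) :
    (∏ p ∈ primesIoc a b, g p) * ∏ p ∈ primesIoc b c, g p = ∏ p ∈ primesIoc a c, g p := by
  simp only [primesIoc, prod_filter]
  exact prod_Ioc_consecutive _ hab hbc

lemma disjoint_of_subset_primesIoc {a b c d : ℕ} (hbc : b ≤ c) {S S' : Finset ℕ}
    (hS : S ⊆ primesIoc a b) (hS' : S' ⊆ primesIoc c d) : Disjoint S S' :=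
  (disjoint_filter_filter (Ioc_disjoint_Ioc_of_le hbc)).mono hS hS'

lemma div_ten_le_card_primesUpTo_mul_log {N : ℕ} (hN : 2 ≤ N) :
    (N : ℝ) / 10 ≤ #(primesUpTo N) * Real.log N := by
  have hN' : (2 : ℝ) ≤ N := by exact_mod_cast hN
  have hcard : #(primesUpTo N) = N.primeCounting := Nat.primesLE_card_eq_primeCounting N
  have hpi := Chebyshev.pi_ge N
  rw [div_le_iff₀ (Real.log_pos (by linarith)), ← hcard] at hpi
  have hlog : Real.log (N + 1) ≤ Real.log 3 + (N - 2) / 3 := by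
    have := Real.log_le_sub_one_of_pos (show (0 : ℝ) < (N + 1) / 3 by positivity)
    rw [Real.log_div (by positivity) (by norm_num)] at this
    linarith
  nlinarith [Real.log_two_gt_d9, Real.log_three_lt_d9]

lemma pow_card_primesIoc_two_mul_le (n : ℕ) : n ^ #(primesIoc n (2 * n)) ≤ 2 ^ (2 * n) := by
  have hdvd : ∏ p ∈ primesIoc n (2 * n), p ∣ n.centralBinom := by
    refine prod_primes_dvd _ (fun p hp => (mem_primesIoc.1 hp).2.prime) fun p hp => ?_
    obtain ⟨⟨hnp, hp2n⟩, hprime⟩ := mem_primesIoc.1 hp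
    rw [Nat.centralBinom, two_mul]
    exact hprime.dvd_choose_add hnp hnp (two_mul n ▸ hp2n)
  calc n ^ #(primesIoc n (2 * n)) ≤ ∏ p ∈ primesIoc n (2 * n), p :=
        pow_card_le_prod _ _ _ fun p hp => (mem_primesIoc.1 hp).1.1.le
    _ ≤ n.centralBinom := Nat.le_of_dvd n.centralBinom_pos hdvd
    _ ≤ 2 ^ (2 * n) := Nat.choose_le_two_pow _ _

lemma mul_card_primesIoc_two_pow_le (i : ℕ) :
    i * #(primesIoc (2 ^ i) (2 ^ (i + 1))) ≤ 2 * 2 ^ i := by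
  have h := pow_card_primesIoc_two_mul_le (2 ^ i)
  rw [← pow_mul, Nat.pow_le_pow_iff_right one_lt_two, ← pow_succ'] at h
  exact h.trans_eq (pow_succ' 2 i)

/-- The Euler factor `(1 - 1/p)⁻¹` of the harmonic series. -/
noncomputable def eulerFactor (p : ℕ) : ℝ := p / (p - 1)

lemma eulerFactor_eq {p : ℕ} (hp : 2 ≤ p) : eulerFactor p = 1 + 1 / ((p : ℝ) - 1) := by
  have : (2 : ℝ) ≤ p := by exact_mod_cast hp
  rw [eulerFactor]
  field_simp [show (p : ℝ) - 1 ≠ 0 by linarith]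
  ring

lemma eulerFactor_nonneg {p : ℕ} (hp : p.Prime) : 0 ≤ eulerFactor p := by
  have : (1 : ℝ) ≤ p := by exact_mod_cast hp.one_le
  exact div_nonneg (by linarith) (by linarith)

lemma prod_eulerFactor_primesIoc_nonneg (a b : ℕ) : 0 ≤ ∏ p ∈ primesIoc a b, eulerFactor p :=
  prod_nonneg fun _ hp => eulerFactor_nonneg (mem_primesIoc.1 hp).2

lemma prod_eulerFactor_dyadic_le {i : ℕ} (hi : 1 ≤ i) :
    ∏ p ∈ primesIoc (2 ^ i) (2 ^ (i + 1)), eulerFactor p ≤ Real.exp (2 / i) := by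
  have hfactor : ∀ p ∈ primesIoc (2 ^ i) (2 ^ (i + 1)),
      eulerFactor p ≤ Real.exp (1 / (2 : ℝ) ^ i) := by
    intro p hp
    obtain ⟨⟨hip, -⟩, hprime⟩ := mem_primesIoc.1 hp
    have hle : (2 : ℝ) ^ i ≤ (p : ℝ) - 1 := by
      have : ((2 ^ i + 1 : ℕ) : ℝ) ≤ p := by exact_mod_cast hip
      push_cast at this
      linarith
    rw [eulerFactor_eq hprime.two_le, add_comm]
    exact (add_le_add_left (one_div_le_one_div_of_le (by positivity) hle) 1).trans
      (Real.add_one_le_exp _)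
  have hcard : (i : ℝ) * #(primesIoc (2 ^ i) (2 ^ (i + 1))) ≤ 2 * 2 ^ i := by
    exact_mod_cast mul_card_primesIoc_two_pow_le i
  have hi' : (0 : ℝ) < i := by exact_mod_cast hi
  calc ∏ p ∈ primesIoc (2 ^ i) (2 ^ (i + 1)), eulerFactor p
      ≤ ∏ _p ∈ primesIoc (2 ^ i) (2 ^ (i + 1)), Real.exp (1 / (2 : ℝ) ^ i) :=
        prod_le_prod (fun p hp => eulerFactor_nonneg (mem_primesIoc.1 hp).2) hfactor
    _ = Real.exp (#(primesIoc (2 ^ i) (2 ^ (i + 1))) * (1 / (2 : ℝ) ^ i)) := by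
        rw [prod_const, ← Real.exp_nat_mul]
    _ ≤ Real.exp (2 / i) := by
        rw [Real.exp_le_exp, mul_one_div, div_le_div_iff₀ (by positivity) hi']
        linarith

lemma prod_eulerFactor_two_pow_le_exp_harmonic (i : ℕ) :
    ∏ p ∈ primesIoc 0 (2 ^ (i + 1)), eulerFactor p ≤ 2 * Real.exp (2 * (harmonic i : ℝ)) := by
  induction i with
  | zero =>
    have : primesIoc 0 (2 ^ (0 + 1)) = {2} := by decide
    rw [this]
    norm_num [eulerFactor]
  | succ i ih =>
    rw [← prod_primesIoc_consecutive eulerFactor (Nat.zero_le _)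
      (Nat.pow_le_pow_right two_pos (Nat.le_succ (i + 1)))]
    calc _ ≤ 2 * Real.exp (2 * (harmonic i : ℝ)) * Real.exp (2 / (i + 1 : ℕ)) :=
          mul_le_mul ih (prod_eulerFactor_dyadic_le (by lia))
            (prod_eulerFactor_primesIoc_nonneg _ _) (by positivity)
      _ = _ := by
          rw [mul_assoc, ← Real.exp_add, harmonic_succ]
          push_cast
          ring_nf

lemma prod_eulerFactor_two_pow_le {i : ℕ} (hi : 1 ≤ i) :
    ∏ p ∈ primesIoc 0 (2 ^ i), eulerFactor p ≤ 2 * Real.exp 2 * (i : ℝ) ^ 2 := by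
  obtain ⟨k, rfl⟩ := Nat.exists_eq_add_of_le' hi
  have hharm : (harmonic k : ℝ) ≤ 1 + Real.log (k + 1 : ℕ) := by
    refine le_trans ?_ (harmonic_le_one_add_log (k + 1))
    rw [harmonic_succ]
    push_cast
    exact le_add_of_nonneg_right (by positivity)
  calc _ ≤ 2 * Real.exp (2 * (harmonic k : ℝ)) := prod_eulerFactor_two_pow_le_exp_harmonic k
    _ ≤ 2 * Real.exp (2 + 2 * Real.log (k + 1 : ℕ)) := by gcongr; linarith
    _ = 2 * Real.exp 2 * ((k + 1 : ℕ) : ℝ) ^ 2 := by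
      rw [Real.exp_add, two_mul (Real.log _), Real.exp_add, Real.exp_log (by positivity)]
      ring

/-- The square-free modulus `q` whose set of prime factors is `S`. All the moduli below are
square-free and are encoded by such sets. -/
def modulus (S : Finset ℕ) : ℕ := ∏ p ∈ S, p

lemma modulus_pos {S : Finset ℕ} (hS : ∀ p ∈ S, p.Prime) : 0 < modulus S :=
  prod_pos fun p hp => (hS p hp).pos

/-- The value `1 / φ(q)` at `q = modulus S`, for a set `S` of primes. -/
noncomputable def invTotient (S : Finset ℕ) : ℝ := ∏ p ∈ S, 1 / ((p : ℝ) - 1)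

lemma invTotient_nonneg {S : Finset ℕ} (hS : ∀ p ∈ S, p.Prime) : 0 ≤ invTotient S :=
  prod_nonneg fun p hp => by
    have : (1 : ℝ) ≤ p := by exact_mod_cast (hS p hp).one_le
    exact one_div_nonneg.2 (by linarith)

lemma sum_inv_factoredNumbers_le {F B : Finset ℕ} (hF : ∀ p ∈ F, p.Prime)
    (hB : ∀ n ∈ B, n ∈ Nat.factoredNumbers F) :
    ∑ n ∈ B, (n : ℝ)⁻¹ ≤ ∏ p ∈ F, eulerFactor p := by
  let inv : ℕ →* ℝ := invMonoidHom.comp (Nat.castRingHom ℝ : ℕ →* ℝ)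
  have hinv : ∀ {p : ℕ}, p.Prime → ‖inv p‖ < 1 := fun {p} hp => by
    simpa [inv] using inv_lt_one_of_one_lt₀ (Nat.one_lt_cast.2 hp.one_lt)
  have hsum := (EulerProduct.summable_and_hasSum_factoredNumbers_prod_filter_prime_geometric
    hinv F).2
  rw [filter_true_of_mem hF] at hsum
  have hle := sum_le_hasSum (B.attach.map ⟨fun n : B => (⟨n, hB n n.2⟩ : Nat.factoredNumbers F),
    fun a b hab => Subtype.ext (Subtype.mk.inj hab)⟩) (fun i _ => by simp [inv]) hsum
  rw [sum_map] at hle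
  calc ∑ n ∈ B, (n : ℝ)⁻¹ = ∑ n ∈ B.attach, inv n := (sum_attach B fun n => (n : ℝ)⁻¹).symm
    _ ≤ ∏ p ∈ F, (1 - inv p)⁻¹ := hle
    _ = ∏ p ∈ F, eulerFactor p := prod_congr rfl fun p hp => by
      have : (p : ℝ) ≠ 0 := Nat.cast_ne_zero.2 (hF p hp).ne_zero
      rw [eulerFactor, ← inv_div, sub_div, div_self this]
      simp [inv]

lemma invTotient_eq_prod_eulerFactor {F : Finset ℕ} (hF : ∀ p ∈ F, p.Prime) :
    invTotient F = (modulus F : ℝ)⁻¹ * ∏ p ∈ F, eulerFactor p := by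
  rw [modulus, Nat.cast_prod, ← prod_inv_distrib, ← prod_mul_distrib]
  refine prod_congr rfl fun p hp => ?_
  have : (p : ℝ) ≠ 0 := Nat.cast_ne_zero.2 (hF p hp).ne_zero
  rw [eulerFactor, inv_mul_eq_div, div_div_cancel_left' this, one_div]

lemma sum_inv_le_invTotient {F B : Finset ℕ} (hF : ∀ p ∈ F, p.Prime)
    (hB : ∀ n ∈ B, n ≠ 0 ∧ n.primeFactors = F) :
    ∑ n ∈ B, (n : ℝ)⁻¹ ≤ invTotient F := by
  set q := modulus F with hq
  have hdvd : ∀ n ∈ B, q ∣ n := fun n hn => by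
    rw [hq, modulus, ← (hB n hn).2]
    exact Nat.prod_primeFactors_dvd n
  have hinj : Set.InjOn (· / q) B := fun a ha b hb hab => by
    rw [← Nat.div_mul_cancel (hdvd a ha), ← Nat.div_mul_cancel (hdvd b hb)]
    exact congrArg (· * q) hab
  have hquot : ∀ m ∈ B.image (· / q), m ∈ Nat.factoredNumbers F := by
    simp only [mem_image, forall_exists_index, and_imp]
    rintro _ n hn rfl
    obtain ⟨hn0, hfac⟩ := hB n hn
    have hdiv : n / q ∣ n := Nat.div_dvd_of_dvd (hdvd n hn)
    rw [Nat.mem_factoredNumbers_iff_primeFactors_subset, ← hfac]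
    exact ⟨fun h => hn0 (Nat.eq_zero_of_zero_dvd (h ▸ hdiv)), Nat.primeFactors_mono hdiv hn0⟩
  calc ∑ n ∈ B, (n : ℝ)⁻¹ = (q : ℝ)⁻¹ * ∑ m ∈ B.image (· / q), (m : ℝ)⁻¹ := by
        rw [sum_image hinj, mul_sum]
        refine sum_congr rfl fun n hn => ?_
        rw [← mul_inv, ← Nat.cast_mul, Nat.mul_div_cancel' (hdvd n hn)]
    _ ≤ (q : ℝ)⁻¹ * ∏ p ∈ F, eulerFactor p := by
        gcongr
        exact sum_inv_factoredNumbers_le hF hquot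
    _ = invTotient F := (invTotient_eq_prod_eulerFactor hF).symm

/-- The square-free moduli `q ≤ Q` composed of primes in `(u, Q]`, encoded by their sets of prime
factors: the index set of Selberg's sieve. -/
def selbergSupport (u Q : ℕ) : Finset (Finset ℕ) :=
  {S ∈ (primesIoc u Q).powerset | modulus S ≤ Q}

lemma mem_selbergSupport {u Q : ℕ} {S : Finset ℕ} :
    S ∈ selbergSupport u Q ↔ S ⊆ primesIoc u Q ∧ modulus S ≤ Q := by
  simp [selbergSupport]

lemma prime_of_mem_selbergSupport {u Q : ℕ} {S : Finset ℕ} (hS : S ∈ selbergSupport u Q) :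
    ∀ p ∈ S, p.Prime :=
  prime_of_subset_primesIoc (mem_selbergSupport.1 hS).1

/-- The normalising sum `∑ 1 / φ(q)` of Selberg's sieve over the moduli in `selbergSupport u Q`. -/
noncomputable def selbergSum (u Q : ℕ) : ℝ := ∑ S ∈ selbergSupport u Q, invTotient S

lemma one_le_selbergSum {u Q : ℕ} (hQ : 1 ≤ Q) : 1 ≤ selbergSum u Q := by
  have h : (∅ : Finset ℕ) ∈ selbergSupport u Q := by simp [mem_selbergSupport, modulus, hQ]
  simpa [invTotient, selbergSum] using single_le_sum (f := invTotient)
    (fun S hS => invTotient_nonneg (prime_of_mem_selbergSupport hS)) h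

lemma filter_primeFactors_mem_selbergSupport (u : ℕ) {n Q : ℕ} (hn : n ∈ Icc 1 Q) :
    {p ∈ n.primeFactors | u < p} ∈ selbergSupport u Q := by
  obtain ⟨hn1, hnQ⟩ := mem_Icc.1 hn
  refine mem_selbergSupport.2 ⟨fun p hp => ?_, ?_⟩
  · obtain ⟨hpn, hup⟩ := mem_filter.1 hp
    exact mem_primesIoc.2 ⟨⟨hup, (Nat.le_of_mem_primeFactors hpn).trans hnQ⟩,
      Nat.prime_of_mem_primeFactors hpn⟩
  · exact (Nat.le_of_dvd hn1 ((prod_dvd_prod_of_subset _ _ _ (filter_subset _ _)).trans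
      (Nat.prod_primeFactors_dvd n))).trans hnQ

lemma filter_primeFactors_subset_primesIoc (u n : ℕ) :
    {p ∈ n.primeFactors | ¬ u < p} ⊆ primesIoc 0 u := fun p hp => by
  obtain ⟨hpn, hpu⟩ := mem_filter.1 hp
  have hprime := Nat.prime_of_mem_primeFactors hpn
  exact mem_primesIoc.2 ⟨⟨hprime.pos, not_lt.1 hpu⟩, hprime⟩

lemma selbergSum_mul_prod_eulerFactor (u Q : ℕ) :
    selbergSum u Q * ∏ p ∈ primesIoc 0 u, eulerFactor p =
      ∑ x ∈ selbergSupport u Q ×ˢ (primesIoc 0 u).powerset, invTotient (x.1 ∪ x.2) := by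
  have hexpand : ∏ p ∈ primesIoc 0 u, eulerFactor p = ∑ S ∈ (primesIoc 0 u).powerset,
      invTotient S := by
    rw [prod_congr rfl fun p hp => eulerFactor_eq (mem_primesIoc.1 hp).2.two_le, prod_one_add]
    rfl
  rw [hexpand, selbergSum, sum_mul_sum, ← sum_product']
  refine sum_congr rfl fun x hx => ?_
  obtain ⟨hlarge, hsmall⟩ := mem_product.1 hx
  exact (prod_union (disjoint_of_subset_primesIoc le_rfl (mem_powerset.1 hsmall)
    (mem_selbergSupport.1 hlarge).1).symm).symm

lemma log_le_selbergSum_mul_prod_eulerFactor (u : ℕ) {Q : ℕ} (hQ : 1 ≤ Q) :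
    Real.log Q ≤ selbergSum u Q * ∏ p ∈ primesIoc 0 u, eulerFactor p := by
  have hharm : Real.log Q ≤ ∑ n ∈ Icc 1 Q, (n : ℝ)⁻¹ := by
    have h := log_add_one_le_harmonic Q
    rw [harmonic_eq_sum_Icc] at h
    push_cast at h
    exact (Real.log_le_log (by exact_mod_cast hQ) (by linarith)).trans h
  refine hharm.trans ?_
  rw [selbergSum_mul_prod_eulerFactor, ← sum_fiberwise_of_maps_to
    (g := fun n => (n.primeFactors.filter (u < ·), n.primeFactors.filter (¬ u < ·)))
    fun n hn => mem_product.2 ⟨filter_primeFactors_mem_selbergSupport u hn,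
      mem_powerset.2 (filter_primeFactors_subset_primesIoc u n)⟩]
  refine sum_le_sum fun x hx => sum_inv_le_invTotient (fun p hp => ?_) fun n hn => ?_
  · obtain ⟨hlarge, hsmall⟩ := mem_product.1 hx
    exact (mem_union.1 hp).elim (prime_of_mem_selbergSupport hlarge p)
      (prime_of_subset_primesIoc (mem_powerset.1 hsmall) p)
  · obtain ⟨hnQ, rfl⟩ := mem_filter.1 hn
    exact ⟨Nat.one_le_iff_ne_zero.1 (mem_Icc.1 hnQ).1, (filter_union_filter_not_eq _ _).symm⟩

/-! ### Ramanujan sums -/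

/-- The Ramanujan sum `c_p(n)` normalised to `μ(p) c_p(n) / φ(p)`, for a prime `p`. -/
noncomputable def primeRamanujan (p : ℕ) (n : ℤ) : ℝ :=
  if (p : ℤ) ∣ n then -1 else 1 / ((p : ℝ) - 1)

/-- The normalised Ramanujan sum `n ↦ μ(q) c_q(n) / φ(q)` to the modulus `q = modulus S`. -/
noncomputable def ramanujan (S : Finset ℕ) (n : ℤ) : ℝ := ∏ p ∈ S, primeRamanujan p n

lemma abs_primeRamanujan_le {p : ℕ} (hp : p.Prime) (n : ℤ) : |primeRamanujan p n| ≤ 1 := by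
  have : (2 : ℝ) ≤ p := by exact_mod_cast hp.two_le
  unfold primeRamanujan
  split_ifs
  · simp
  · rw [abs_of_nonneg (one_div_nonneg.2 (by linarith)), div_le_one (by linarith)]
    linarith

lemma abs_ramanujan_le {S : Finset ℕ} (hS : ∀ p ∈ S, p.Prime) (n : ℤ) : |ramanujan S n| ≤ 1 := by
  rw [ramanujan, abs_prod]
  exact prod_le_one (fun _ _ => abs_nonneg _) fun p hp => abs_primeRamanujan_le (hS p hp) n

lemma ramanujan_add_of_dvd {S : Finset ℕ} {t : ℤ} (h : (modulus S : ℤ) ∣ t) (n : ℤ) :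
    ramanujan S (n + t) = ramanujan S n := by
  refine prod_congr rfl fun p hp => ?_
  have hpt : (p : ℤ) ∣ t := (Int.natCast_dvd_natCast.2 (dvd_prod_of_mem (fun p => p) hp)).trans h
  simp only [primeRamanujan, dvd_add_left hpt]

lemma ramanujan_eq_mul_erase {S : Finset ℕ} {p : ℕ} (hp : p ∈ S) (n : ℤ) :
    ramanujan S n = primeRamanujan p n * ramanujan (S.erase p) n :=
  (mul_prod_erase S (fun q => primeRamanujan q n) hp).symm

lemma modulus_eq_mul_erase {S : Finset ℕ} {p : ℕ} (hp : p ∈ S) :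
    modulus S = p * modulus (S.erase p) :=
  (mul_prod_erase S (fun q => q) hp).symm

lemma not_dvd_modulus {S : Finset ℕ} (hS : ∀ q ∈ S, q.Prime) {p : ℕ} (hp : p.Prime) (hpS : p ∉ S) :
    ¬ p ∣ modulus S := fun h => by
  obtain ⟨q, hq, hpq⟩ := (Prime.dvd_finsetProd_iff hp.prime _).1 h
  exact hpS ((Nat.prime_dvd_prime_iff_eq hp (hS q hq)).1 hpq ▸ hq)

lemma card_filter_range_dvd_add_mul {p : ℕ} (hp : p.Prime) {t : ℤ} (ht : ¬ (p : ℤ) ∣ t) (n : ℤ) :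
    #{j ∈ range p | (p : ℤ) ∣ n + (j : ℕ) * t} = 1 := by
  have := Fact.mk hp
  have ht0 : (t : ZMod p) ≠ 0 := fun h => ht ((ZMod.intCast_zmod_eq_zero_iff_dvd t p).1 h)
  refine card_eq_one.2 ⟨(-n / t : ZMod p).val, ?_⟩
  ext j
  rw [mem_filter, mem_range, mem_singleton, ← ZMod.intCast_zmod_eq_zero_iff_dvd]
  push_cast
  rw [add_eq_zero_iff_neg_eq, ← div_eq_iff ht0, eq_comm (b := (j : ZMod p))]
  constructor
  · rintro ⟨hj, h⟩
    rw [← h, ZMod.val_natCast_of_lt hj]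
  · rintro rfl
    exact ⟨ZMod.val_lt _, ZMod.natCast_zmod_val _⟩

lemma sum_range_primeRamanujan_eq_zero {p : ℕ} (hp : p.Prime) {t : ℤ} (ht : ¬ (p : ℤ) ∣ t)
    (n : ℤ) : ∑ j ∈ range p, primeRamanujan p (n + j * t) = 0 := by
  have hp1 : (p : ℝ) - 1 ≠ 0 := by
    have : (1 : ℝ) < p := by exact_mod_cast hp.one_lt
    linarith
  have hsplit : ∀ j : ℕ, primeRamanujan p (n + j * t) =
      1 / ((p : ℝ) - 1) - if (p : ℤ) ∣ n + j * t then 1 + 1 / ((p : ℝ) - 1) else 0 := by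
    intro j
    unfold primeRamanujan
    split_ifs <;> ring
  simp_rw [hsplit]
  rw [sum_sub_distrib, ← sum_filter, sum_const, sum_const, card_filter_range_dvd_add_mul hp ht,
    card_range, one_smul, nsmul_eq_mul]
  field_simp
  ring

lemma sum_Ico_add_one (G : ℤ → ℝ) {a b : ℤ} (hab : a ≤ b) :
    ∑ n ∈ Ico a b, G (n + 1) = ∑ n ∈ Ico a b, G n + (G b - G a) := by
  induction b, hab using Int.leInduction with
  | base => simp
  | succ b hab ih =>
    rw [← insert_Ico_right_eq_Ico_add_one hab, sum_insert right_notMem_Ico,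
      sum_insert right_notMem_Ico, ih]
    ring

lemma abs_sum_Ico_add_sub_sum_Ico_le {G : ℤ → ℝ} {B : ℝ} (hG : ∀ n, |G n| ≤ B) (a b : ℤ) (s : ℕ) :
    |∑ n ∈ Ico a b, G (n + s) - ∑ n ∈ Ico a b, G n| ≤ 2 * B * s := by
  rcases lt_or_ge b a with hab | hab
  · have hB : 0 ≤ B := (abs_nonneg _).trans (hG 0)
    rw [Ico_eq_empty_of_le hab.le, sum_empty, sum_empty, sub_zero, abs_zero]
    positivity
  induction s with
  | zero => simp
  | succ s ih =>
    have hstep := sum_Ico_add_one (fun n => G (n + s)) hab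
    have hshift : ∀ n : ℤ, G (n + (s + 1 : ℕ)) = G (n + 1 + s) := fun n => by
      push_cast
      ring_nf
    simp_rw [hshift, hstep]
    have hB := abs_le.1 (hG (b + s))
    have hA := abs_le.1 (hG (a + s))
    rw [abs_le] at ih ⊢
    push_cast
    constructor <;> linarith

lemma abs_sum_Ico_le_of_sum_range_eq_zero {G : ℤ → ℝ} {B : ℝ} (hG : ∀ n, |G n| ≤ B) {p : ℕ}
    (hp : 0 < p) (t : ℕ) (hzero : ∀ n : ℤ, ∑ j ∈ range p, G (n + (j * t : ℕ)) = 0) (a b : ℤ) :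
    |∑ n ∈ Ico a b, G n| ≤ 2 * B * (p * t) := by
  have hB : 0 ≤ B := (abs_nonneg _).trans (hG 0)
  have hsum : ∑ j ∈ range p, (∑ n ∈ Ico a b, G (n + (j * t : ℕ)) - ∑ n ∈ Ico a b, G n) =
      -(p * ∑ n ∈ Ico a b, G n) := by
    rw [sum_sub_distrib, sum_comm, sum_congr rfl fun n _ => hzero n]
    simp
  have hbound : p * |∑ n ∈ Ico a b, G n| ≤ p * (2 * B * (p * t)) := by
    calc p * |∑ n ∈ Ico a b, G n|
        = |∑ j ∈ range p, (∑ n ∈ Ico a b, G (n + (j * t : ℕ)) - ∑ n ∈ Ico a b, G n)| := by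
          rw [hsum, abs_neg, abs_mul, Nat.abs_cast]
      _ ≤ ∑ j ∈ range p, 2 * B * (p * t) := by
          refine (abs_sum_le_sum_abs _ _).trans (sum_le_sum fun j hj => ?_)
          refine (abs_sum_Ico_add_sub_sum_Ico_le hG a b _).trans ?_
          have : (j : ℝ) ≤ p := by exact_mod_cast (mem_range.1 hj).le
          push_cast
          gcongr
      _ = p * (2 * B * (p * t)) := by simp
  exact le_of_mul_le_mul_left hbound (by exact_mod_cast hp)

section Correlation

variable {S S' : Finset ℕ} (hS : ∀ p ∈ S, p.Prime) (hS' : ∀ p ∈ S', p.Prime)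
include hS hS'

lemma sum_range_ramanujan_mul_eq_zero {p : ℕ} (hp : p ∈ S) (hp' : p ∉ S') (x y : ℤ) :
    ∑ j ∈ range p, ramanujan S (x + (j * (modulus (S.erase p) * modulus S') : ℕ)) *
      ramanujan S' (y + (j * (modulus (S.erase p) * modulus S') : ℕ)) = 0 := by
  set t := modulus (S.erase p) * modulus S' with ht
  have hterm : ∀ j : ℕ, ramanujan S (x + (j * t : ℕ)) * ramanujan S' (y + (j * t : ℕ)) =
      primeRamanujan p (x + j * (t : ℤ)) * (ramanujan (S.erase p) x * ramanujan S' y) := by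
    intro j
    rw [ramanujan_add_of_dvd (S := S') (Int.natCast_dvd_natCast.2
        ((dvd_mul_left _ _).trans (dvd_mul_left t j))), ramanujan_eq_mul_erase hp,
      ramanujan_add_of_dvd (S := S.erase p) (Int.natCast_dvd_natCast.2
        ((dvd_mul_right _ _).trans (dvd_mul_left t j)))]
    push_cast
    ring
  have hpt : ¬ (p : ℤ) ∣ t := by
    rw [Int.natCast_dvd_natCast, ht, (hS p hp).dvd_mul, not_or]
    exact ⟨not_dvd_modulus (fun q hq => hS q (mem_of_mem_erase hq)) (hS p hp) (notMem_erase p S),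
      not_dvd_modulus hS' (hS p hp) hp'⟩
  rw [sum_congr rfl fun j _ => hterm j, ← sum_mul,
    sum_range_primeRamanujan_eq_zero (hS p hp) hpt, zero_mul]

lemma abs_sum_ramanujan_mul_le_of_notMem {p : ℕ} (hp : p ∈ S) (hp' : p ∉ S') (z w a b : ℤ) :
    |∑ n ∈ Ico a b, ramanujan S (n + z) * ramanujan S' (n + w)| ≤
      2 * (modulus S * modulus S') := by
  have hbound : ∀ n, |ramanujan S (n + z) * ramanujan S' (n + w)| ≤ 1 := fun n => by
    rw [abs_mul]
    exact mul_le_one₀ (abs_ramanujan_le hS _) (abs_nonneg _) (abs_ramanujan_le hS' _)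
  refine (abs_sum_Ico_le_of_sum_range_eq_zero hbound (hS p hp).pos
    (modulus (S.erase p) * modulus S') (fun n => ?_) a b).trans_eq ?_
  · simpa only [add_right_comm] using
      sum_range_ramanujan_mul_eq_zero hS hS' hp hp' (n + z) (n + w)
  · rw [modulus_eq_mul_erase hp]
    push_cast
    ring

lemma abs_sum_ramanujan_mul_le (hne : S ≠ S') (z w a b : ℤ) :
    |∑ n ∈ Ico a b, ramanujan S (n + z) * ramanujan S' (n + w)| ≤
      2 * (modulus S * modulus S') := by
  by_cases h : S ⊆ S'
  · obtain ⟨p, hp', hp⟩ := not_subset.1 fun h' => hne (h.antisymm h')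
    have := abs_sum_ramanujan_mul_le_of_notMem hS' hS hp' hp w z a b
    simpa only [mul_comm] using this
  · obtain ⟨p, hp, hp'⟩ := not_subset.1 h
    exact abs_sum_ramanujan_mul_le_of_notMem hS hS' hp hp' z w a b

end Correlation

lemma sum_range_product_filter_sub_eq (N : ℕ) (g : ℤ → ℤ → ℝ) (z : ℤ) :
    ∑ x ∈ range N ×ˢ range N with (x.2 : ℤ) - x.1 = z, g x.1 x.2 =
      ∑ n ∈ Ico (max 0 (-z)) (min (N : ℤ) (N - z)), g n (n + z) := by
  refine sum_nbij' (fun x => (x.1 : ℤ)) (fun n => (n.toNat, (n + z).toNat)) ?_ ?_ ?_ ?_ ?_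
  · intro x hx
    simp only [mem_filter, mem_product, mem_range] at hx
    simp only [mem_Ico]
    lia
  · intro n hn
    simp only [mem_Ico] at hn
    simp only [mem_filter, mem_product, mem_range]
    lia
  · intro x hx
    simp only [mem_filter, mem_product, mem_range] at hx
    ext <;> simp only <;> lia
  · intro n hn
    simp only [mem_Ico] at hn
    simp only
    lia
  · intro x hx
    rw [← (mem_filter.1 hx).2, add_sub_cancel]

lemma sum_range_sum_range_eq_sum_diagonals (N : ℕ) (g : ℤ → ℤ → ℝ) :
    ∑ n ∈ range N, ∑ m ∈ range N, g n m =
      ∑ z ∈ Ico (-N : ℤ) N, ∑ n ∈ Ico (max 0 (-z)) (min (N : ℤ) (N - z)), g n (n + z) := by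
  have hmaps : ∀ x ∈ range N ×ˢ range N, (x.2 : ℤ) - x.1 ∈ Ico (-N : ℤ) N := by
    intro x hx
    simp only [mem_product, mem_range] at hx
    simp only [mem_Ico]
    lia
  rw [← sum_product' (range N) (range N) fun n m : ℕ => g n m, ← sum_fiberwise_of_maps_to hmaps]
  exact sum_congr rfl fun z _ => sum_range_product_filter_sub_eq N g z

lemma abs_sum_sum_ramanujan_mul_le {S S' : Finset ℕ} (hS : ∀ p ∈ S, p.Prime)
    (hS' : ∀ p ∈ S', p.Prime) (hne : S ≠ S') (N : ℕ) {F : ℤ → ℝ} {c : ℝ} (hF : ∀ z, |F z| ≤ c) :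
    |∑ n ∈ range N, ∑ m ∈ range N, ramanujan S n * ramanujan S' m * F (m - n)| ≤
      4 * (modulus S * modulus S') * N * c := by
  have hdiag : ∀ z ∈ Ico (-N : ℤ) N, |∑ n ∈ Ico (max 0 (-z)) (min (N : ℤ) (N - z)),
      ramanujan S n * ramanujan S' (n + z) * F (n + z - n)| ≤
        2 * (modulus S * modulus S') * c := by
    intro z _
    have hcorr := abs_sum_ramanujan_mul_le hS hS' hne 0 z (max 0 (-z)) (min (N : ℤ) (N - z))
    simp only [add_zero] at hcorr
    simp only [add_sub_cancel_left]
    rw [← sum_mul, abs_mul]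
    exact mul_le_mul hcorr (hF z) (abs_nonneg _) (by positivity)
  rw [sum_range_sum_range_eq_sum_diagonals N
    fun n m => ramanujan S n * ramanujan S' m * F (m - n)]
  refine (abs_sum_le_sum_abs _ _).trans ((sum_le_sum hdiag).trans_eq ?_)
  rw [sum_const, Int.card_Ico, nsmul_eq_mul, show ((N : ℤ) - -N).toNat = 2 * N by lia]
  push_cast
  ring

/-! ### Quadrilinear forms -/

lemma card_filter_range_dvd_le {N d : ℕ} (hd : 0 < d) (hdN : d ≤ N) :
    (#{n ∈ range N | d ∣ n} : ℝ) ≤ 2 * N / d := by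
  have hsub : {n ∈ range N | d ∣ n} ⊆ insert 0 {n ∈ Ioc 0 N | d ∣ n} := fun n hn => by
    simp only [mem_filter, mem_range, mem_insert, mem_Ioc] at hn ⊢
    lia
  have hcard : #{n ∈ range N | d ∣ n} ≤ N / d + 1 := by
    refine (card_le_card hsub).trans ((card_insert_le _ _).trans_eq ?_)
    rw [Nat.Ioc_filter_dvd_card_eq_div]
  have hdiv : ((N / d : ℕ) : ℝ) ≤ N / d := Nat.cast_div_le
  have hone : (1 : ℝ) ≤ N / d := by
    rw [one_le_div (by exact_mod_cast hd)]
    exact_mod_cast hdN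
  calc (#{n ∈ range N | d ∣ n} : ℝ) ≤ (N / d : ℕ) + 1 := by exact_mod_cast hcard
    _ ≤ N / d + N / d := by linarith
    _ = 2 * N / d := by ring

lemma abs_primeRamanujan_le_ite {p : ℕ} (hp : p.Prime) (n : ℕ) :
    |primeRamanujan p n| ≤ (if p ∣ n then 1 else 0) + 2 / (p : ℝ) := by
  have h2 : (2 : ℝ) ≤ p := by exact_mod_cast hp.two_le
  unfold primeRamanujan
  simp only [Int.natCast_dvd_natCast]
  split_ifs
  · rw [abs_neg, abs_one]
    exact le_add_of_nonneg_right (by positivity)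
  · rw [abs_of_nonneg (one_div_nonneg.2 (by linarith)), zero_add,
      div_le_div_iff₀ (by linarith) (by linarith)]
    linarith

lemma prod_ite_dvd {S : Finset ℕ} (hS : ∀ p ∈ S, p.Prime) (n : ℕ) :
    ∏ p ∈ S, (if p ∣ n then (1 : ℝ) else 0) = if modulus S ∣ n then 1 else 0 := by
  rw [prod_ite_zero, prod_const_one]
  exact if_congr ⟨fun h => prod_primes_dvd n (fun p hp => (hS p hp).prime) h,
    fun h p hp => (dvd_prod_of_mem (fun p : ℕ => p) hp).trans h⟩ rfl rfl

lemma abs_ramanujan_le_sum_powerset {S : Finset ℕ} (hS : ∀ p ∈ S, p.Prime) (n : ℕ) :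
    |ramanujan S n| ≤
      ∑ U ∈ S.powerset,
        (if modulus U ∣ n then 1 else 0) * ((2 : ℝ) ^ #(S \ U) / modulus (S \ U)) := by
  rw [ramanujan, abs_prod]
  refine (prod_le_prod (fun _ _ => abs_nonneg _)
    fun p hp => abs_primeRamanujan_le_ite (hS p hp) n).trans_eq ?_
  rw [prod_add]
  refine sum_congr rfl fun U hU => ?_
  rw [prod_ite_dvd fun p hp => hS p (mem_powerset.1 hU hp), prod_div_distrib, prod_const, modulus,
    modulus, Nat.cast_prod]

lemma sum_abs_ramanujan_le {S : Finset ℕ} (hS : ∀ p ∈ S, p.Prime) {N : ℕ} (hN : modulus S ≤ N) :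
    ∑ n ∈ range N, |ramanujan S n| ≤ 2 * N * 4 ^ #S / modulus S := by
  have hterm : ∀ U ∈ S.powerset,
      ∑ n ∈ range N, (if modulus U ∣ n then 1 else 0) * ((2 : ℝ) ^ #(S \ U) / modulus (S \ U)) ≤
        2 * N * 2 ^ #S / modulus S := by
    intro U hU
    have hUS := mem_powerset.1 hU
    have hU0 : 0 < modulus U := modulus_pos fun p hp => hS p (hUS hp)
    have hsplit : modulus (S \ U) * modulus U = modulus S := prod_sdiff hUS
    have hUN : modulus U ≤ N :=
      (Nat.le_of_dvd (modulus_pos hS) (hsplit ▸ dvd_mul_left _ _)).trans hN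
    rw [← sum_mul, sum_boole]
    calc (#{n ∈ range N | modulus U ∣ n} : ℝ) * (2 ^ #(S \ U) / modulus (S \ U))
        ≤ 2 * N / modulus U * (2 ^ #(S \ U) / modulus (S \ U)) := by
          gcongr
          exact card_filter_range_dvd_le hU0 hUN
      _ = 2 * N * 2 ^ #(S \ U) / modulus S := by
          rw [← hsplit, Nat.cast_mul]
          ring
      _ ≤ 2 * N * 2 ^ #S / modulus S := by
          gcongr
          · exact one_le_two
          · exact sdiff_subset
  calc ∑ n ∈ range N, |ramanujan S n|
      ≤ ∑ U ∈ S.powerset, (2 * N * 2 ^ #S / modulus S : ℝ) :=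
        (sum_le_sum fun n _ => abs_ramanujan_le_sum_powerset hS n).trans
          (sum_comm.trans_le (sum_le_sum hterm))
    _ = 2 * N * 4 ^ #S / modulus S := by
        rw [sum_const, card_powerset, nsmul_eq_mul, show (4 : ℝ) = 2 * 2 by norm_num, mul_pow]
        push_cast
        ring

/-- The quadrilinear form with kernel `F` that van der Corput's inequality produces from the second
moment of a weighted average. -/
noncomputable def quadForm (N : ℕ) (F a a' b b' : ℤ → ℝ) : ℝ :=
  ∑ n ∈ range N, ∑ n' ∈ range N, ∑ m ∈ range N, ∑ m' ∈ range N,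
    a n * a' n' * b m * b' m' * F (m + m' - n - n')

lemma quadForm_swap_left (N : ℕ) (F a a' b b' : ℤ → ℝ) :
    quadForm N F a a' b b' = quadForm N F a' a b b' := by
  unfold quadForm
  rw [sum_comm]
  refine sum_congr rfl fun n _ => sum_congr rfl fun n' _ => sum_congr rfl fun m _ =>
    sum_congr rfl fun m' _ => ?_
  rw [sub_right_comm, mul_comm (a n')]

lemma quadForm_swap_right (N : ℕ) (F a a' b b' : ℤ → ℝ) :
    quadForm N F a a' b b' = quadForm N F a a' b' b := by
  unfold quadForm
  refine sum_congr rfl fun n _ => sum_congr rfl fun n' _ => ?_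
  rw [sum_comm]
  refine sum_congr rfl fun m _ => sum_congr rfl fun m' _ => ?_
  rw [add_comm (m : ℤ), mul_right_comm (a n * a' n')]

lemma quadForm_eq_sum_bilinear (N : ℕ) (F a a' b b' : ℤ → ℝ) :
    quadForm N F a a' b b' = ∑ n ∈ range N, ∑ m ∈ range N, ∑ n' ∈ range N, ∑ m' ∈ range N,
      a' n' * b' m' * (a n * b m * F (m' - n' + m - n)) := by
  unfold quadForm
  refine sum_congr rfl fun n _ => ?_
  rw [sum_comm]
  refine sum_congr rfl fun m _ => sum_congr rfl fun n' _ => sum_congr rfl fun m' _ => ?_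
  rw [show (m + m' - n - n' : ℤ) = m' - n' + m - n by ring]
  ring

lemma quadForm_eq_sum_product (N : ℕ) (F a a' b b' : ℤ → ℝ) :
    quadForm N F a a' b b' = ∑ x ∈ range N ×ˢ range N ×ˢ range N ×ˢ range N,
      a x.1 * a' x.2.1 * b x.2.2.1 * b' x.2.2.2 * F (x.2.2.1 + x.2.2.2 - x.1 - x.2.1) := by
  simp only [quadForm, sum_product]

lemma quadForm_sum {ι : Type*} (s : Finset ι) (N : ℕ) (F : ℤ → ℝ) (B : ι → ℝ) (g : ι → ℤ → ℝ)
    {a : ℤ → ℝ} (ha : ∀ n, a n = ∑ i ∈ s, B i * g i n) :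
    quadForm N F a a a a = ∑ i ∈ s, ∑ i' ∈ s, ∑ j ∈ s, ∑ j' ∈ s,
      B i * B i' * B j * B j' * quadForm N F (g i) (g i') (g j) (g j') := by
  have linear_fst (a' b b') :
      quadForm N F a a' b b' = ∑ i ∈ s, B i * quadForm N F (g i) a' b b' := by
    simp_rw [quadForm_eq_sum_product, ha, mul_sum, sum_mul]
    rw [sum_comm]
    exact sum_congr rfl fun i _ => sum_congr rfl fun x _ => by ring
  have linear_thd (b b' c) :
      quadForm N F b b' a c = ∑ j ∈ s, B j * quadForm N F b b' (g j) c := by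
    simp_rw [quadForm_eq_sum_product, ha, mul_sum, sum_mul]
    rw [sum_comm]
    exact sum_congr rfl fun j _ => sum_congr rfl fun x _ => by ring
  have linear_snd (b c c') :
      quadForm N F b a c c' = ∑ i ∈ s, B i * quadForm N F b (g i) c c' := by
    simp_rw [quadForm_swap_left N F b, linear_fst]
  have linear_fth (b b' c) :
      quadForm N F b b' c a = ∑ j ∈ s, B j * quadForm N F b b' c (g j) := by
    simp_rw [quadForm_swap_right N F b b' c, linear_thd]
  rw [linear_fst]
  simp_rw [linear_snd, linear_thd, linear_fth, mul_sum, mul_assoc]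

lemma abs_sum_quadruples_le {ι : Type*} (s : Finset ι) {G : ι → ι → ι → ι → ℝ}
    {c : ℝ} {w : ι → ℝ} (hc : 0 ≤ c) (hdiag : ∀ i ∈ s, |G i i i i| ≤ w i)
    (hoff : ∀ i ∈ s, ∀ i' ∈ s, ∀ j ∈ s, ∀ j' ∈ s, ¬ (i = j' ∧ i = j ∧ i = i') →
      |G i i' j j'| ≤ c) :
    |∑ i ∈ s, ∑ i' ∈ s, ∑ j ∈ s, ∑ j' ∈ s, G i i' j j'| ≤ #s ^ 4 * c + ∑ i ∈ s, w i := by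
  classical
  have hterm : ∀ i ∈ s, ∀ i' ∈ s, ∀ j ∈ s, ∀ j' ∈ s,
      |G i i' j j'| ≤ c + if i = j' ∧ i = j ∧ i = i' then w i else 0 := by
    intro i hi i' hi' j hj j' hj'
    split_ifs with h
    · obtain ⟨rfl, rfl, rfl⟩ := h
      exact (hdiag i hi).trans (le_add_of_nonneg_left hc)
    · rw [add_zero]
      exact hoff i hi i' hi' j hj j' hj' h
  have habs : |∑ i ∈ s, ∑ i' ∈ s, ∑ j ∈ s, ∑ j' ∈ s, G i i' j j'| ≤
      ∑ i ∈ s, ∑ i' ∈ s, ∑ j ∈ s, ∑ j' ∈ s, |G i i' j j'| := by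
    refine (abs_sum_le_sum_abs _ _).trans (sum_le_sum fun i _ => ?_)
    refine (abs_sum_le_sum_abs _ _).trans (sum_le_sum fun i' _ => ?_)
    exact (abs_sum_le_sum_abs _ _).trans (sum_le_sum fun j _ => abs_sum_le_sum_abs _ _)
  refine habs.trans ((sum_le_sum fun i hi => sum_le_sum fun i' hi' => sum_le_sum fun j hj =>
    sum_le_sum fun j' hj' => hterm i hi i' hi' j hj j' hj').trans_eq ?_)
  simp only [sum_add_distrib, sum_const, nsmul_eq_mul]
  congr 1
  · ring
  · refine sum_congr rfl fun i hi => ?_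
    simp only [ite_and, sum_ite_eq, hi, if_true]

lemma abs_quadForm_le_of_ne {S S' : Finset ℕ} (hS : ∀ p ∈ S, p.Prime) (hS' : ∀ p ∈ S', p.Prime)
    {D : ℕ} (hSD : modulus S ≤ D) (hSD' : modulus S' ≤ D) (hne : S ≠ S') (N : ℕ)
    {F a b : ℤ → ℝ} {c : ℝ} (ha : ∀ n, |a n| ≤ 1) (hb : ∀ n, |b n| ≤ 1) (hF : ∀ z, |F z| ≤ c) :
    |quadForm N F a (ramanujan S) b (ramanujan S')| ≤ 4 * D ^ 2 * N ^ 3 * c := by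
  have hc : 0 ≤ c := (abs_nonneg _).trans (hF 0)
  have hmod : (modulus S * modulus S' : ℝ) ≤ D ^ 2 := by
    rw [sq]
    gcongr
  have hinner (n m : ℤ) : |∑ n' ∈ range N, ∑ m' ∈ range N,
      ramanujan S n' * ramanujan S' m' * (a n * b m * F (m' - n' + m - n))| ≤
        4 * D ^ 2 * N * c := by
    have hkernel (z : ℤ) : |a n * b m * F (z + m - n)| ≤ c := by
      rw [abs_mul, abs_mul]
      calc |a n| * |b m| * |F (z + m - n)| ≤ 1 * 1 * c := by
            gcongr
            exacts [ha n, hb m, hF _]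
        _ = c := by ring
    refine (abs_sum_sum_ramanujan_mul_le hS hS' hne N hkernel).trans ?_
    gcongr
  rw [quadForm_eq_sum_bilinear]
  calc _ ≤ ∑ _n ∈ range N, ∑ _m ∈ range N, 4 * D ^ 2 * N * c :=
        (abs_sum_le_sum_abs _ _).trans (sum_le_sum fun n _ =>
          (abs_sum_le_sum_abs _ _).trans (sum_le_sum fun m _ => hinner n m))
    _ = 4 * D ^ 2 * N ^ 3 * c := by
        simp only [sum_const, card_range, nsmul_eq_mul]
        ring

lemma abs_quadForm_ramanujan_le_of_not_all_eq {S₁ S₂ S₃ S₄ : Finset ℕ} {D : ℕ}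
    (h₁ : (∀ p ∈ S₁, p.Prime) ∧ modulus S₁ ≤ D) (h₂ : (∀ p ∈ S₂, p.Prime) ∧ modulus S₂ ≤ D)
    (h₃ : (∀ p ∈ S₃, p.Prime) ∧ modulus S₃ ≤ D) (h₄ : (∀ p ∈ S₄, p.Prime) ∧ modulus S₄ ≤ D)
    (hne : ¬ (S₁ = S₄ ∧ S₁ = S₃ ∧ S₁ = S₂)) (N : ℕ) {F : ℤ → ℝ} {c : ℝ} (hF : ∀ z, |F z| ≤ c) :
    |quadForm N F (ramanujan S₁) (ramanujan S₂) (ramanujan S₃) (ramanujan S₄)| ≤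
      4 * D ^ 2 * N ^ 3 * c := by
  have b₁ := abs_ramanujan_le h₁.1
  have b₂ := abs_ramanujan_le h₂.1
  have b₃ := abs_ramanujan_le h₃.1
  have b₄ := abs_ramanujan_le h₄.1
  by_cases h24 : S₂ = S₄
  · by_cases h14 : S₁ = S₄
    · have h13 : S₁ ≠ S₃ := fun h13 => hne ⟨h14, h13, h14.trans h24.symm⟩
      rw [quadForm_swap_left, quadForm_swap_right]
      exact abs_quadForm_le_of_ne h₁.1 h₃.1 h₁.2 h₃.2 h13 N b₂ b₄ hF
    · rw [quadForm_swap_left]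
      exact abs_quadForm_le_of_ne h₁.1 h₄.1 h₁.2 h₄.2 h14 N b₂ b₃ hF
  · exact abs_quadForm_le_of_ne h₂.1 h₄.1 h₂.2 h₄.2 h24 N b₁ b₃ hF

lemma abs_quadForm_self_le (N : ℕ) (a : ℤ → ℝ) {F : ℤ → ℝ} {c : ℝ} (hF : ∀ z, |F z| ≤ c) :
    |quadForm N F a a a a| ≤ c * (∑ n ∈ range N, |a n|) ^ 4 := by
  have hexpand : c * (∑ n ∈ range N, |a n|) ^ 4 =
      ∑ x ∈ range N ×ˢ range N ×ˢ range N ×ˢ range N,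
        |a x.1| * |a x.2.1| * |a x.2.2.1| * |a x.2.2.2| * c := by
    simp only [sum_product, ← mul_sum, ← sum_mul]
    ring
  rw [hexpand, quadForm_eq_sum_product]
  refine (abs_sum_le_sum_abs _ _).trans (sum_le_sum fun x _ => ?_)
  simp only [abs_mul]
  gcongr
  exact hF _

lemma modulus_injOn : Set.InjOn modulus {S | ∀ p ∈ S, p.Prime} := fun S hS S' hS' h => by
  rw [← Nat.primeFactors_prod hS, ← Nat.primeFactors_prod hS']
  exact congrArg _ h

lemma card_le_of_modulus_le {𝓢 : Finset (Finset ℕ)} {D : ℕ} (hp : ∀ S ∈ 𝓢, ∀ p ∈ S, p.Prime)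
    (hD : ∀ S ∈ 𝓢, modulus S ≤ D) : #𝓢 ≤ D := by
  calc #𝓢 ≤ #(Icc 1 D) := card_le_card_of_injOn modulus
        (fun S hS => mem_coe.2 (mem_Icc.2 ⟨modulus_pos (hp S hS), hD S hS⟩))
        (modulus_injOn.mono hp)
    _ = D := by simp

lemma four_pow_card_le_modulus_sq {S : Finset ℕ} (hS : ∀ p ∈ S, p.Prime) :
    4 ^ #S ≤ modulus S ^ 2 := by
  rw [modulus, ← prod_pow, ← prod_const]
  exact prod_le_prod' fun p hp => Nat.pow_le_pow_left (hS p hp).two_le 2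

/-- The majorant `exp (A ∑ n ^ (-3/2))` of every Euler product `∏ (1 + A p ^ (-3/2))`. -/
noncomputable def rankinConst (A : ℝ) : ℝ :=
  Real.exp (A * ∑' n : ℕ, 1 / (n : ℝ) ^ (3 / 2 : ℝ))

lemma sum_prod_div_sqrt_cube_le {A : ℝ} (hA : 0 ≤ A) (𝓢 : Finset (Finset ℕ)) :
    ∑ S ∈ 𝓢, ∏ p ∈ S, A / √p ^ 3 ≤ rankinConst A := by
  have hsqrt (n : ℕ) : A / √n ^ 3 = A * (1 / (n : ℝ) ^ (3 / 2 : ℝ)) := by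
    rw [mul_one_div, Real.sqrt_eq_rpow, ← Real.rpow_natCast, ← Real.rpow_mul n.cast_nonneg]
    norm_num
  have hsummable : Summable fun n : ℕ => 1 / (n : ℝ) ^ (3 / 2 : ℝ) :=
    Real.summable_one_div_nat_rpow.2 (by norm_num)
  calc ∑ S ∈ 𝓢, ∏ p ∈ S, A / √p ^ 3
      ≤ ∑ S ∈ (𝓢.biUnion id).powerset, ∏ p ∈ S, A / √p ^ 3 :=
        sum_le_sum_of_subset_of_nonneg
          (fun S hS => mem_powerset.2 (subset_biUnion_of_mem id hS))
          fun S _ _ => prod_nonneg fun _ _ => by positivity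
    _ = ∏ p ∈ 𝓢.biUnion id, (1 + A / √p ^ 3) := (prod_one_add _).symm
    _ ≤ ∏ p ∈ 𝓢.biUnion id, Real.exp (A / √p ^ 3) :=
        prod_le_prod (fun _ _ => by positivity) fun p _ => by
          rw [add_comm]
          exact Real.add_one_le_exp _
    _ = Real.exp (A * ∑ p ∈ 𝓢.biUnion id, 1 / (p : ℝ) ^ (3 / 2 : ℝ)) := by
        rw [← Real.exp_sum, mul_sum]
        simp only [hsqrt]
    _ ≤ rankinConst A := by
        unfold rankinConst
        gcongr
        exact hsummable.sum_le_tsum _ fun _ _ => by positivity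

-- Rankin's trick: `q ^ (-4) ≤ t ^ (-10) * q ^ (-3/2)` for `q ≥ t ^ 4`.
lemma sum_pow_card_div_modulus_pow_le {A : ℝ} (hA : 0 ≤ A) {𝓢 : Finset (Finset ℕ)} {t : ℕ}
    (ht : 1 ≤ t) (h𝓢 : ∀ S ∈ 𝓢, t ^ 4 ≤ modulus S) :
    ∑ S ∈ 𝓢, A ^ #S / (modulus S : ℝ) ^ 4 ≤ rankinConst A / (t : ℝ) ^ 10 := by
  have : (0 : ℝ) < t := by exact_mod_cast ht
  have hterm : ∀ S ∈ 𝓢,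
      A ^ #S / (modulus S : ℝ) ^ 4 ≤ 1 / (t : ℝ) ^ 10 * ∏ p ∈ S, A / √p ^ 3 := by
    intro S hS
    have hsq : (t : ℝ) ^ 2 ≤ √(modulus S) := by
      apply Real.le_sqrt_of_sq_le
      rw [← pow_mul]
      exact_mod_cast h𝓢 S hS
    have hsqrt0 : 0 < √(modulus S) := (by positivity : (0 : ℝ) < t ^ 2).trans_le hsq
    have hprod : ∏ p ∈ S, A / √p ^ 3 = A ^ #S / √(modulus S) ^ 3 := by
      rw [prod_div_distrib, prod_const, prod_pow, modulus, Nat.cast_prod,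
        Real.sqrt_prod S fun _ _ => Nat.cast_nonneg _]
    rw [hprod, div_mul_div_comm, one_mul]
    gcongr
    calc (t : ℝ) ^ 10 * √(modulus S) ^ 3 = (t ^ 2) ^ 5 * √(modulus S) ^ 3 := by ring
      _ ≤ √(modulus S) ^ 5 * √(modulus S) ^ 3 := by gcongr
      _ = (√(modulus S) ^ 2) ^ 4 := by ring
      _ = (modulus S : ℝ) ^ 4 := by rw [Real.sq_sqrt (Nat.cast_nonneg _)]
  calc ∑ S ∈ 𝓢, A ^ #S / (modulus S : ℝ) ^ 4
      ≤ 1 / (t : ℝ) ^ 10 * ∑ S ∈ 𝓢, ∏ p ∈ S, A / √p ^ 3 := by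
        rw [mul_sum]
        exact sum_le_sum hterm
    _ ≤ 1 / (t : ℝ) ^ 10 * rankinConst A := by
        gcongr
        exact sum_prod_div_sqrt_cube_le hA 𝓢
    _ = rankinConst A / (t : ℝ) ^ 10 := one_div_mul_eq_div _ _

/-- `a` is a finite combination of the normalised Ramanujan sums of squarefree moduli in `[L, D]`,
with coefficients of divisor-function size. The squarefree moduli are encoded by their sets of prime
factors. -/
def HasRamanujanExpansion (L D : ℕ) (a : ℤ → ℝ) : Prop :=
  ∃ (𝓢 : Finset (Finset ℕ)) (B : Finset ℕ → ℝ),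
    (∀ S ∈ 𝓢, (∀ p ∈ S, p.Prime) ∧ L ≤ modulus S ∧ modulus S ≤ D ∧ |B S| ≤ 4 ^ #S) ∧
      ∀ n, a n = ∑ S ∈ 𝓢, B S * ramanujan S n

lemma abs_pow_four_mul_quadForm_ramanujan_le {S : Finset ℕ} (hS : ∀ p ∈ S, p.Prime) {N : ℕ}
    (hN : modulus S ≤ N) {F : ℤ → ℝ} {B c : ℝ} (hB : |B| ≤ 4 ^ #S) (hF : ∀ z, |F z| ≤ c) :
    |B * B * B * B * quadForm N F (ramanujan S) (ramanujan S) (ramanujan S) (ramanujan S)| ≤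
      16 * N ^ 4 * c * (65536 ^ #S / (modulus S : ℝ) ^ 4) := by
  have hc : 0 ≤ c := (abs_nonneg _).trans (hF 0)
  have hsum := sum_abs_ramanujan_le hS hN
  have : 0 ≤ ∑ n ∈ range N, |ramanujan S n| := sum_nonneg fun _ _ => abs_nonneg _
  simp only [abs_mul]
  calc |B| * |B| * |B| * |B| * |quadForm N F _ _ _ _|
      ≤ 4 ^ #S * 4 ^ #S * 4 ^ #S * 4 ^ #S * (c * (2 * N * 4 ^ #S / modulus S) ^ 4) := by
        gcongr
        exact (abs_quadForm_self_le N _ hF).trans (by gcongr)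
    _ = 16 * N ^ 4 * c * ((4 ^ #S) ^ 8 / (modulus S : ℝ) ^ 4) := by ring
    _ = 16 * N ^ 4 * c * (65536 ^ #S / (modulus S : ℝ) ^ 4) := by
        rw [pow_right_comm]
        norm_num

lemma HasRamanujanExpansion.abs_quadForm_le {t D N : ℕ} {a F : ℤ → ℝ} {c : ℝ}
    (ha : HasRamanujanExpansion (t ^ 4) D a) (ht : 1 ≤ t) (hDN : D ≤ N) (hF : ∀ z, |F z| ≤ c) :
    |quadForm N F a a a a| ≤
      c * (4 * D ^ 14 * N ^ 3 + 16 * N ^ 4 * (rankinConst 65536 / (t : ℝ) ^ 10)) := by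
  obtain ⟨𝓢, B, h𝓢, hexpand⟩ := ha
  have hc : 0 ≤ c := (abs_nonneg _).trans (hF 0)
  have hmod : ∀ S ∈ 𝓢, (∀ p ∈ S, p.Prime) ∧ modulus S ≤ D := fun S hS =>
    ⟨(h𝓢 S hS).1, (h𝓢 S hS).2.2.1⟩
  have hcard : (#𝓢 : ℝ) ≤ D := by
    exact_mod_cast card_le_of_modulus_le (fun S hS => (hmod S hS).1) fun S hS => (hmod S hS).2
  have hB : ∀ S ∈ 𝓢, |B S| ≤ (D : ℝ) ^ 2 := fun S hS => by
    refine (h𝓢 S hS).2.2.2.trans ?_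
    exact_mod_cast (four_pow_card_le_modulus_sq (hmod S hS).1).trans
      (Nat.pow_le_pow_left (hmod S hS).2 2)
  have hoff : ∀ S₁ ∈ 𝓢, ∀ S₂ ∈ 𝓢, ∀ S₃ ∈ 𝓢, ∀ S₄ ∈ 𝓢, ¬ (S₁ = S₄ ∧ S₁ = S₃ ∧ S₁ = S₂) →
      |B S₁ * B S₂ * B S₃ * B S₄ *
        quadForm N F (ramanujan S₁) (ramanujan S₂) (ramanujan S₃) (ramanujan S₄)| ≤
          4 * D ^ 10 * N ^ 3 * c := by
    intro S₁ h₁ S₂ h₂ S₃ h₃ S₄ h₄ hne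
    have hform := abs_quadForm_ramanujan_le_of_not_all_eq (hmod _ h₁) (hmod _ h₂) (hmod _ h₃)
      (hmod _ h₄) hne N hF
    simp only [abs_mul]
    calc _ ≤ (D : ℝ) ^ 2 * D ^ 2 * D ^ 2 * D ^ 2 * (4 * D ^ 2 * N ^ 3 * c) := by
          gcongr
          exacts [hB _ h₁, hB _ h₂, hB _ h₃, hB _ h₄]
      _ = 4 * D ^ 10 * N ^ 3 * c := by ring
  rw [quadForm_sum 𝓢 N F B (fun S n => ramanujan S n) hexpand]
  calc _ ≤ #𝓢 ^ 4 * (4 * D ^ 10 * N ^ 3 * c) +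
        ∑ S ∈ 𝓢, 16 * N ^ 4 * c * (65536 ^ #S / (modulus S : ℝ) ^ 4) :=
        abs_sum_quadruples_le 𝓢 (by positivity)
          (fun S hS => abs_pow_four_mul_quadForm_ramanujan_le (hmod S hS).1
            ((hmod S hS).2.trans hDN) (h𝓢 S hS).2.2.2 hF) hoff
    _ ≤ D ^ 4 * (4 * D ^ 10 * N ^ 3 * c) +
        16 * N ^ 4 * c * (rankinConst 65536 / (t : ℝ) ^ 10) := by
        rw [← mul_sum]
        gcongr
        exact sum_pow_card_div_modulus_pow_le (by norm_num) ht fun S hS => (h𝓢 S hS).2.1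
    _ = c * (4 * D ^ 14 * N ^ 3 + 16 * N ^ 4 * (rankinConst 65536 / (t : ℝ) ^ 10)) := by ring

/-! ### Second moments of weighted averages -/

section Correlation

variable {X : Type*} [MeasurableSpace X] {μ : Measure X} {T : X → X} {f : X → ℝ}

lemma integral_comp_eq_of_measurePreserving (hT : MeasurePreserving T μ μ)
    (hf : AEStronglyMeasurable f μ) : ∫ x, f (T x) ∂μ = ∫ x, f x ∂μ := by
  conv_rhs => rw [← hT.map_eq]
  rw [integral_map hT.aemeasurable (hT.map_eq.symm ▸ hf)]

lemma abs_integral_mul_le {g h : X → ℝ} (hg : MemLp g 2 μ) (hh : MemLp h 2 μ) :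
    |∫ x, g x * h x ∂μ| ≤ (∫ x, g x ^ 2 ∂μ + ∫ x, h x ^ 2 ∂μ) / 2 := by
  rw [← integral_add hg.integrable_sq hh.integrable_sq, ← integral_div]
  refine abs_integral_le_integral_abs.trans
    (integral_mono (hg.integrable_mul hh).abs
      ((hg.integrable_sq.add hh.integrable_sq).div_const 2) fun x => ?_)
  change |g x * h x| ≤ (g x ^ 2 + h x ^ 2) / 2
  rw [abs_mul, le_div_iff₀ two_pos, ← sq_abs (g x), ← sq_abs (h x)]
  linarith [two_mul_le_add_sq |g x| |h x|]

lemma sq_integral_mul_le {g h : X → ℝ} (hg : MemLp g 2 μ) (hh : MemLp h 2 μ) :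
    (∫ x, g x * h x ∂μ) ^ 2 ≤ (∫ x, g x ^ 2 ∂μ) * ∫ x, h x ^ 2 ∂μ := by
  have hquad (s : ℝ) : 0 ≤ (∫ x, h x ^ 2 ∂μ) * (s * s) + -(2 * ∫ x, g x * h x ∂μ) * s +
      ∫ x, g x ^ 2 ∂μ := by
    have hg2 := hg.integrable_sq
    have hh2 : Integrable (fun x => s * s * h x ^ 2) μ := hh.integrable_sq.const_mul _
    have hgh : Integrable (fun x => 2 * s * (g x * h x)) μ := (hg.integrable_mul hh).const_mul _
    calc 0 ≤ ∫ x, (s * s * h x ^ 2 - 2 * s * (g x * h x) + g x ^ 2) ∂μ :=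
          integral_nonneg fun x => (sq_nonneg (g x - s * h x)).trans_eq (by ring)
      _ = _ := by
          rw [integral_add (by exact hh2.sub hgh) hg2, integral_sub hh2 hgh, integral_const_mul,
            integral_const_mul]
          ring
  have := discrim_le_zero hquad
  unfold discrim at this
  linarith

/-- The correlation `∫ f ∘ T ^ i * f ∘ T ^ j`, as a function of the difference `z = i - j`. Since
`T` need not be invertible, a negative difference is realised by iterating in the second factor. -/
noncomputable def correlation (μ : Measure X) (T : X → X) (f : X → ℝ) (z : ℤ) : ℝ :=
  ∫ x, f (T^[z.toNat] x) * f (T^[(-z).toNat] x) ∂μ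

lemma correlation_neg (f : X → ℝ) (z : ℤ) : correlation μ T f (-z) = correlation μ T f z := by
  unfold correlation
  rw [neg_neg]
  simp_rw [mul_comm]

lemma memLp_comp_iterate (hT : MeasurePreserving T μ μ) (hf : MemLp f 2 μ) (n : ℕ) :
    MemLp (fun x => f (T^[n] x)) 2 μ :=
  hf.comp_measurePreserving (hT.iterate n)

lemma integral_sq_comp_iterate (hT : MeasurePreserving T μ μ) (hf : MemLp f 2 μ) (n : ℕ) :
    ∫ x, f (T^[n] x) ^ 2 ∂μ = ∫ x, f x ^ 2 ∂μ :=
  integral_comp_eq_of_measurePreserving (hT.iterate n) (hf.integrable_sq.aestronglyMeasurable)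

lemma abs_correlation_le (hT : MeasurePreserving T μ μ) (hf : MemLp f 2 μ) (z : ℤ) :
    |correlation μ T f z| ≤ ∫ x, f x ^ 2 ∂μ := by
  refine (abs_integral_mul_le (memLp_comp_iterate hT hf _) (memLp_comp_iterate hT hf _)).trans_eq ?_
  rw [integral_sq_comp_iterate hT hf, integral_sq_comp_iterate hT hf, add_self_div_two]

lemma integral_mul_comp_iterate (hT : MeasurePreserving T μ μ) (hf : MemLp f 2 μ) (i j : ℕ) :
    ∫ x, f (T^[i] x) * f (T^[j] x) ∂μ = correlation μ T f ((i : ℤ) - j) := by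
  wlog hij : j ≤ i generalizing i j
  · rw [← neg_sub, correlation_neg, ← this j i (le_of_not_ge hij)]
    simp_rw [mul_comm]
  have hi : ((i : ℤ) - j).toNat = i - j := by lia
  have hj : (-((i : ℤ) - j)).toNat = 0 := by lia
  have hint : Integrable (fun x => f (T^[i - j] x) * f (T^[0] x)) μ :=
    (memLp_comp_iterate hT hf _).integrable_mul (memLp_comp_iterate hT hf _)
  rw [correlation, hi, hj,
    ← integral_comp_eq_of_measurePreserving (hT.iterate j) hint.aestronglyMeasurable]
  simp only [← Function.iterate_add_apply, Nat.sub_add_cancel hij, zero_add]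

lemma integral_sum_mul_sum_comp_iterate (hT : MeasurePreserving T μ μ) (hf : MemLp f 2 μ)
    {ι κ : Type*} (s : Finset ι) (r : Finset κ) (a : ι → ℝ) (b : κ → ℝ) (i : ι → ℕ) (j : κ → ℕ) :
    ∫ x, (∑ k ∈ s, a k * f (T^[i k] x)) * (∑ l ∈ r, b l * f (T^[j l] x)) ∂μ =
      ∑ k ∈ s, ∑ l ∈ r, a k * b l * correlation μ T f ((i k : ℤ) - j l) := by
  have hint (k : ι) (l : κ) :
      Integrable (fun x => a k * b l * (f (T^[i k] x) * f (T^[j l] x))) μ :=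
    ((memLp_comp_iterate hT hf _).integrable_mul (memLp_comp_iterate hT hf _)).const_mul _
  simp_rw [sum_mul_sum, mul_mul_mul_comm (a _)]
  rw [integral_finsetSum _ fun k _ => integrable_finsetSum _ fun l _ => hint k l]
  refine sum_congr rfl fun k _ => ?_
  rw [integral_finsetSum _ fun l _ => hint k l]
  refine sum_congr rfl fun l _ => ?_
  rw [integral_const_mul, integral_mul_comp_iterate hT hf]

lemma integral_sq_sum_comp_iterate (hT : MeasurePreserving T μ μ) (hf : MemLp f 2 μ) (a : ℤ → ℝ)
    (N : ℕ) : ∫ x, (∑ n ∈ range N, a n * f (T^[n] x)) ^ 2 ∂μ =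
      ∑ q ∈ range N ×ˢ range N, a q.1 * a q.2 * correlation μ T f ((q.1 : ℤ) - q.2) := by
  simp_rw [sq, integral_sum_mul_sum_comp_iterate hT hf, sum_product]

-- Translating the correlations by `T ^ N` exhibits `∫ (∑ a n * f ∘ T ^ n) ^ 2` as the inner product
-- of `f ∘ T ^ N` with `Z`, to which the Cauchy-Schwarz inequality applies.
lemma sq_integral_sq_sum_le_mul_quadForm (hT : MeasurePreserving T μ μ) (hf : MemLp f 2 μ)
    (a : ℤ → ℝ) (N : ℕ) :
    (∫ x, (∑ n ∈ range N, a n * f (T^[n] x)) ^ 2 ∂μ) ^ 2 ≤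
      (∫ x, f x ^ 2 ∂μ) * quadForm N (correlation μ T f) a a a a := by
  let Z (x : X) : ℝ := ∑ q ∈ range N ×ˢ range N, a q.1 * a q.2 * f (T^[N + q.2 - q.1] x)
  have hZ : MemLp Z 2 μ := memLp_finsetSum _ fun q _ => (memLp_comp_iterate hT hf _).const_mul _
  have hcast : ∀ q ∈ range N ×ˢ range N, ((N + q.2 - q.1 : ℕ) : ℤ) = N + q.2 - q.1 := by
    intro q hq
    rw [mem_product, mem_range, mem_range] at hq
    lia
  have hinner : ∫ x, (∑ n ∈ range N, a n * f (T^[n] x)) ^ 2 ∂μ = ∫ x, f (T^[N] x) * Z x ∂μ := by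
    have hsingle := integral_sum_mul_sum_comp_iterate hT hf {()} (range N ×ˢ range N)
      (fun _ => 1) (fun q => a q.1 * a q.2) (fun _ => N) fun q => N + q.2 - q.1
    simp only [sum_singleton, one_mul] at hsingle
    rw [hsingle, integral_sq_sum_comp_iterate hT hf]
    refine sum_congr rfl fun q hq => ?_
    rw [hcast q hq, show (N : ℤ) - (N + q.2 - q.1) = q.1 - q.2 by ring]
  have hnorm : ∫ x, Z x ^ 2 ∂μ = quadForm N (correlation μ T f) a a a a := by
    simp_rw [Z, sq, integral_sum_mul_sum_comp_iterate hT hf]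
    simp only [quadForm, sum_product]
    refine sum_congr rfl fun n hn => ?_
    conv_rhs => rw [sum_comm]
    refine sum_congr rfl fun m hm => ?_
    conv_rhs => rw [sum_comm]
    refine sum_congr rfl fun k hk => sum_congr rfl fun l hl => ?_
    rw [hcast (n, m) (mk_mem_product hn hm), hcast (k, l) (mk_mem_product hk hl)]
    rw [show (N + m - n - (N + l - k) : ℤ) = m + k - n - l by ring]
    ring
  rw [hinner, ← hnorm, ← integral_sq_comp_iterate hT hf N]
  exact sq_integral_mul_le (memLp_comp_iterate hT hf N) hZ

/-- The average `(1 / N) ∑ a n * f (T ^ n x)` over `n < N`. -/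
noncomputable def weightedAvg (T : X → X) (f : X → ℝ) (a : ℤ → ℝ) (N : ℕ) (x : X) : ℝ :=
  (1 / (N : ℝ)) * ∑ n ∈ range N, a n * f (T^[n] x)

/-- The absolute constant of the `L²` bound for weights with a Ramanujan expansion. -/
noncomputable def l2Const : ℝ := 16 * rankinConst 65536 + 4

lemma four_le_l2Const : 4 ≤ l2Const := by
  have : 0 < rankinConst 65536 := Real.exp_pos _
  unfold l2Const
  linarith

lemma HasRamanujanExpansion.pow_le {t D : ℕ} {a : ℤ → ℝ} (ha : HasRamanujanExpansion (t ^ 4) D a)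
    (hne : a ≠ 0) : t ^ 4 ≤ D ∧ 1 ≤ D := by
  obtain ⟨𝓢, B, h𝓢, hexpand⟩ := ha
  rcases 𝓢.eq_empty_or_nonempty with rfl | ⟨S, hS⟩
  · exact absurd (funext fun n => (hexpand n).trans sum_empty) hne
  · obtain ⟨hp, hL, hD, -⟩ := h𝓢 S hS
    exact ⟨hL.trans hD, (modulus_pos hp).trans_le hD⟩

lemma HasRamanujanExpansion.abs_quadForm_le_of_pow_le {t D N : ℕ} {a F : ℤ → ℝ} {c : ℝ}
    (ha : HasRamanujanExpansion (t ^ 4) D a) (hne : a ≠ 0) (ht : 1 ≤ t) (hDN : D ^ 17 ≤ N)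
    (hF : ∀ z, |F z| ≤ c) : |quadForm N F a a a a| ≤ c * (l2Const * N ^ 4 / t ^ 10) := by
  have ht1 : (1 : ℝ) ≤ t := by exact_mod_cast ht
  have hc : 0 ≤ c := (abs_nonneg _).trans (hF 0)
  obtain ⟨htD, -⟩ := ha.pow_le hne
  have htD3 : (t : ℝ) ^ 10 ≤ D ^ 3 := by
    calc (t : ℝ) ^ 10 ≤ t ^ 12 := pow_le_pow_right₀ ht1 (by norm_num)
      _ = ((t ^ 4 : ℕ) : ℝ) ^ 3 := by push_cast; ring
      _ ≤ D ^ 3 := by gcongr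
  have hoff : 4 * (D : ℝ) ^ 14 * N ^ 3 ≤ 4 * N ^ 4 / t ^ 10 := by
    rw [le_div_iff₀ (by positivity)]
    calc 4 * (D : ℝ) ^ 14 * N ^ 3 * t ^ 10 ≤ 4 * D ^ 14 * N ^ 3 * D ^ 3 := by gcongr
      _ = 4 * ((D ^ 17 : ℕ) : ℝ) * N ^ 3 := by push_cast; ring
      _ ≤ 4 * N * N ^ 3 := by gcongr
      _ = 4 * N ^ 4 := by ring
  calc |quadForm N F a a a a|
      ≤ c * (4 * D ^ 14 * N ^ 3 + 16 * N ^ 4 * (rankinConst 65536 / (t : ℝ) ^ 10)) :=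
        ha.abs_quadForm_le ht ((Nat.le_self_pow (by norm_num) D).trans hDN) hF
    _ ≤ c * (4 * N ^ 4 / t ^ 10 + 16 * N ^ 4 * (rankinConst 65536 / (t : ℝ) ^ 10)) := by gcongr
    _ = c * (l2Const * N ^ 4 / t ^ 10) := by
        unfold l2Const
        ring

theorem HasRamanujanExpansion.integral_sq_weightedAvg_le {t D N : ℕ} {a : ℤ → ℝ}
    (ha : HasRamanujanExpansion (t ^ 4) D a) (hT : MeasurePreserving T μ μ) (hf : MemLp f 2 μ)
    (ht : 1 ≤ t) (hDN : D ^ 17 ≤ N) :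
    ∫ x, weightedAvg T f a N x ^ 2 ∂μ ≤ l2Const * (∫ x, f x ^ 2 ∂μ) / t ^ 5 := by
  have hC := four_le_l2Const
  have : 0 ≤ ∫ x, f x ^ 2 ∂μ := integral_nonneg fun x => sq_nonneg _
  rcases eq_or_ne a 0 with rfl | hne
  · simp only [weightedAvg, Pi.zero_apply, zero_mul, sum_const_zero, mul_zero, ne_eq,
      OfNat.ofNat_ne_zero, not_false_eq_true, zero_pow, integral_zero]
    positivity
  have hN : 0 < N := (Nat.one_le_pow 17 D (ha.pow_le hne).2).trans hDN
  have hsq : (∫ x, (∑ n ∈ range N, a n * f (T^[n] x)) ^ 2 ∂μ) ^ 2 ≤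
      (l2Const * (∫ x, f x ^ 2 ∂μ) * N ^ 2 / t ^ 5) ^ 2 := by
    calc _ ≤ (∫ x, f x ^ 2 ∂μ) * quadForm N (correlation μ T f) a a a a :=
          sq_integral_sq_sum_le_mul_quadForm hT hf a N
      _ ≤ (∫ x, f x ^ 2 ∂μ) * ((∫ x, f x ^ 2 ∂μ) * (l2Const * N ^ 4 / t ^ 10)) := by
          gcongr
          exact (le_abs_self _).trans
            (ha.abs_quadForm_le_of_pow_le hne ht hDN (abs_correlation_le hT hf))
      _ = l2Const * ((∫ x, f x ^ 2 ∂μ) ^ 2 * N ^ 4 / t ^ 10) := by ring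
      _ ≤ l2Const ^ 2 * ((∫ x, f x ^ 2 ∂μ) ^ 2 * N ^ 4 / t ^ 10) := by
          gcongr
          nlinarith
      _ = (l2Const * (∫ x, f x ^ 2 ∂μ) * N ^ 2 / t ^ 5) ^ 2 := by ring
  calc ∫ x, weightedAvg T f a N x ^ 2 ∂μ
      = (1 / (N : ℝ)) ^ 2 * ∫ x, (∑ n ∈ range N, a n * f (T^[n] x)) ^ 2 ∂μ := by
        simp_rw [weightedAvg, mul_pow, integral_const_mul]
    _ ≤ (1 / (N : ℝ)) ^ 2 * (l2Const * (∫ x, f x ^ 2 ∂μ) * N ^ 2 / t ^ 5) := by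
        gcongr
        exact le_of_sq_le_sq hsq (by positivity)
    _ = l2Const * (∫ x, f x ^ 2 ∂μ) / t ^ 5 := by field_simp

end Correlation

/-! ### The maximal ergodic theorem -/

section MaximalErgodic

variable {X : Type*}

/-- The maximum of the Birkhoff sums of length at most `n`. -/
def birkhoffMax (T : X → X) (g : X → ℝ) (n : ℕ) : X → ℝ := partialSups (birkhoffSum T g) n

lemma birkhoffSum_le_birkhoffMax (T : X → X) (g : X → ℝ) {k n : ℕ} (hk : k ≤ n) (x : X) :
    birkhoffSum T g k x ≤ birkhoffMax T g n x :=
  le_partialSups_of_le (birkhoffSum T g) hk x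

lemma birkhoffMax_nonneg (T : X → X) (g : X → ℝ) (n : ℕ) (x : X) : 0 ≤ birkhoffMax T g n x := by
  simpa only [birkhoffSum_zero] using birkhoffSum_le_birkhoffMax T g n.zero_le x

lemma birkhoffMax_le_max (T : X → X) (g : X → ℝ) (n : ℕ) (x : X) :
    birkhoffMax T g n x ≤ max 0 (g x + birkhoffMax T g n (T x)) := by
  rw [birkhoffMax, Pi.partialSups_apply]
  refine partialSups_le _ _ _ fun k hk => ?_
  cases k with
  | zero => exact le_max_of_le_left (birkhoffSum_zero T g x).le
  | succ k =>
    rw [birkhoffSum_succ']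
    exact le_max_of_le_right
      (add_le_add_right (birkhoffSum_le_birkhoffMax T g (Nat.le_of_succ_le hk) (T x)) _)

lemma birkhoffMax_mono (T : X → X) (g : X → ℝ) : Monotone (birkhoffMax T g) :=
  (partialSups (birkhoffSum T g)).monotone

variable [MeasurableSpace X] {μ : Measure X} {T : X → X}

lemma integrable_birkhoffSum (hT : MeasurePreserving T μ μ) {g : X → ℝ} (hg : Integrable g μ)
    (n : ℕ) : Integrable (birkhoffSum T g n) μ :=
  integrable_finsetSum _ fun k _ => (hT.iterate k).integrable_comp_of_integrable hg

lemma integrable_birkhoffMax (hT : MeasurePreserving T μ μ) {g : X → ℝ} (hg : Integrable g μ)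
    (n : ℕ) : Integrable (birkhoffMax T g n) μ := by
  unfold birkhoffMax
  induction n with
  | zero => exact partialSups_zero (birkhoffSum T g) ▸ integrable_birkhoffSum hT hg 0
  | succ n ih =>
    rw [partialSups_add_one]
    exact ih.sup (integrable_birkhoffSum hT hg (n + 1))

/-- The **maximal ergodic theorem** (Hopf). -/
theorem setIntegral_birkhoffMax_pos_nonneg (hT : MeasurePreserving T μ μ) {g : X → ℝ}
    (hg : Integrable g μ) (n : ℕ) : 0 ≤ ∫ x in {x | 0 < birkhoffMax T g n x}, g x ∂μ := by
  have hM := integrable_birkhoffMax hT hg n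
  have hMT : Integrable (fun x => birkhoffMax T g n (T x)) μ := hT.integrable_comp_of_integrable hM
  have hE : NullMeasurableSet {x | 0 < birkhoffMax T g n x} μ :=
    nullMeasurableSet_lt aemeasurable_const hM.aemeasurable
  calc 0 = ∫ x, (birkhoffMax T g n x - birkhoffMax T g n (T x)) ∂μ := by
        rw [integral_sub hM hMT, integral_comp_eq_of_measurePreserving hT hM.aestronglyMeasurable,
          sub_self]
    _ ≤ ∫ x, {x | 0 < birkhoffMax T g n x}.indicator g x ∂μ := by
        refine integral_mono (hM.sub hMT) (hg.indicator₀ hE) fun x => ?_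
        have hmax := birkhoffMax_le_max T g n x
        by_cases hx : x ∈ {x | 0 < birkhoffMax T g n x}
        · rw [Set.indicator_of_mem hx]
          linarith [(le_max_iff.1 hmax).resolve_left (not_le.2 hx)]
        · rw [Set.indicator_of_notMem hx]
          rw [Set.mem_ofPred_eq, not_lt] at hx
          linarith [birkhoffMax_nonneg T g n (T x)]
    _ = ∫ x in {x | 0 < birkhoffMax T g n x}, g x ∂μ := integral_indicator₀ hE

lemma measureReal_birkhoffMax_sub_pos_le [IsFiniteMeasure μ] (hT : MeasurePreserving T μ μ)
    {F : X → ℝ} (hF : Integrable F μ) (h0 : ∀ x, 0 ≤ F x) {s : ℝ} (hs : 0 < s) (n : ℕ) :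
    μ.real {x | 0 < birkhoffMax T (fun x => F x - s) n x} ≤ (∫ x, F x ∂μ) / s := by
  have hhopf := setIntegral_birkhoffMax_pos_nonneg hT (hF.sub (integrable_const s)) n
  change 0 ≤ ∫ x in {x | 0 < birkhoffMax T (fun x => F x - s) n x}, (F x - s) ∂μ at hhopf
  rw [integral_sub hF.integrableOn (integrable_const s).integrableOn, setIntegral_const,
    smul_eq_mul] at hhopf
  rw [le_div_iff₀ hs]
  linarith [setIntegral_le_integral (s := {x | 0 < birkhoffMax T (fun x => F x - s) n x}) hF
    (ae_of_all _ h0)]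

theorem measure_exists_lt_birkhoffSum_le [IsFiniteMeasure μ] (hT : MeasurePreserving T μ μ)
    {F : X → ℝ} (hF : Integrable F μ) (h0 : ∀ x, 0 ≤ F x) {s : ℝ} (hs : 0 < s) :
    μ {x | ∃ n : ℕ, s * n < birkhoffSum T F n x} ≤ ENNReal.ofReal ((∫ x, F x ∂μ) / s) := by
  have hsub : {x | ∃ n : ℕ, s * n < birkhoffSum T F n x} ⊆
      ⋃ n, {x | 0 < birkhoffMax T (fun x => F x - s) n x} := by
    rintro x ⟨n, hn⟩
    refine Set.mem_iUnion.2 ⟨n, ?_⟩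
    have hsum : birkhoffSum T (fun x => F x - s) n x = birkhoffSum T F n x - s * n := by
      simp only [birkhoffSum, sum_sub_distrib, sum_const, card_range, nsmul_eq_mul, mul_comm]
    have hle := birkhoffSum_le_birkhoffMax T (fun x => F x - s) le_rfl x (n := n)
    rw [Set.mem_ofPred_eq]
    linarith
  have hmono : Monotone fun n => {x | 0 < birkhoffMax T (fun x => F x - s) n x} :=
    fun m n hmn x hx => lt_of_lt_of_le hx (birkhoffMax_mono T _ hmn x)
  refine (measure_mono hsub).trans ?_
  rw [hmono.measure_iUnion]
  refine iSup_le fun n => ?_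
  rw [← ofReal_measureReal]
  exact ENNReal.ofReal_le_ofReal (measureReal_birkhoffMax_sub_pos_le hT hF h0 hs n)

end MaximalErgodic

section SecondMoment

variable {X : Type*} [MeasurableSpace X] {μ : Measure X} {F : X → ℝ}

lemma measure_lt_le_integral_sq_div (hF : MemLp F 2 μ) {s : ℝ} (hs : 0 < s) :
    μ {x | s < F x} ≤ ENNReal.ofReal ((∫ x, F x ^ 2 ∂μ) / s ^ 2) := by
  have hs2 : 0 < s ^ 2 := pow_pos hs 2
  calc μ {x | s < F x} ≤ μ {x | ENNReal.ofReal (s ^ 2) ≤ ENNReal.ofReal (F x ^ 2)} :=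
        measure_mono fun x hx => ENNReal.ofReal_le_ofReal (pow_le_pow_left₀ hs.le (le_of_lt hx) 2)
    _ ≤ (∫⁻ x, ENNReal.ofReal (F x ^ 2) ∂μ) / ENNReal.ofReal (s ^ 2) :=
        meas_ge_le_lintegral_div hF.integrable_sq.aemeasurable.ennreal_ofReal
          (ENNReal.ofReal_pos.2 hs2).ne' ENNReal.ofReal_ne_top
    _ = ENNReal.ofReal ((∫ x, F x ^ 2 ∂μ) / s ^ 2) := by
        rw [ENNReal.ofReal_div_of_pos hs2, ofReal_integral_eq_lintegral_ofReal hF.integrable_sq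
          (ae_of_all _ fun x => sq_nonneg _)]

lemma integral_abs_le_of_integral_sq_le [IsProbabilityMeasure μ] (hF : MemLp F 2 μ) {v : ℝ}
    (hv : 0 ≤ v) (hFv : ∫ x, F x ^ 2 ∂μ ≤ v ^ 2) : ∫ x, |F x| ∂μ ≤ v := by
  have hcs := sq_integral_mul_le hF.abs (memLp_const (μ := μ) (1 : ℝ))
  simp only [Pi.abs_apply, mul_one, sq_abs, one_pow, integral_const, probReal_univ, smul_eq_mul]
    at hcs
  exact le_of_sq_le_sq (hcs.trans hFv) hv

end SecondMoment

/-! ### Sieve weights -/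

section SquareExpansion

/-- The coefficient `a` in `c ^ 2 = a c + 1 / (p - 1)`, satisfied by both values
`c = -1` and `c = 1 / (p - 1)` of `primeRamanujan p`. -/
noncomputable def squareCoeff (p : ℕ) : ℝ := -((p : ℝ) - 2) / ((p : ℝ) - 1)

lemma abs_squareCoeff_le {p : ℕ} (hp : p.Prime) : |squareCoeff p| ≤ 1 := by
  have : (2 : ℝ) ≤ p := by exact_mod_cast hp.two_le
  rw [squareCoeff, abs_div, abs_neg, abs_of_nonneg (by linarith), abs_of_nonneg (by linarith),
    div_le_one (by linarith)]
  linarith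

lemma primeRamanujan_mul_self {p : ℕ} (hp : p.Prime) (n : ℤ) :
    primeRamanujan p n * primeRamanujan p n =
      squareCoeff p * primeRamanujan p n + 1 / ((p : ℝ) - 1) := by
  have : (2 : ℝ) ≤ p := by exact_mod_cast hp.two_le
  have : (p : ℝ) - 1 ≠ 0 := by linarith
  unfold primeRamanujan squareCoeff
  split_ifs <;> field_simp <;> ring

lemma ramanujan_mul_self {S : Finset ℕ} (hS : ∀ p ∈ S, p.Prime) (n : ℤ) :
    ramanujan S n * ramanujan S n =
      ∑ J ∈ S.powerset, (∏ p ∈ J, squareCoeff p) * invTotient (S \ J) * ramanujan J n := by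
  rw [ramanujan, ← prod_mul_distrib,
    prod_congr rfl fun p hp => primeRamanujan_mul_self (hS p hp) n, prod_add]
  refine sum_congr rfl fun J _ => ?_
  rw [prod_mul_distrib, ← ramanujan, ← invTotient]
  ring

lemma ramanujan_union {S S' : Finset ℕ} (h : Disjoint S S') (n : ℤ) :
    ramanujan (S ∪ S') n = ramanujan S n * ramanujan S' n :=
  prod_union h

/-- The weight of the term `ramanujan (symmDiff S S' ∪ J)` in the expansion of
`ramanujan S * ramanujan S'`, for `J ⊆ S ∩ S'`. -/
noncomputable def productCoeff (S S' J : Finset ℕ) : ℝ :=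
  (∏ p ∈ J, squareCoeff p) * invTotient ((S ∩ S') \ J)

lemma ramanujan_mul {S : Finset ℕ} (hS : ∀ p ∈ S, p.Prime) (S' : Finset ℕ) (n : ℤ) :
    ramanujan S n * ramanujan S' n =
      ∑ J ∈ (S ∩ S').powerset, productCoeff S S' J * ramanujan (symmDiff S S' ∪ J) n := by
  have hleft : ramanujan S n = ramanujan (S ∩ S') n * ramanujan (S \ S') n :=
    (prod_inter_mul_prod_sdiff S S' _).symm
  have hright : ramanujan S' n = ramanujan (S ∩ S') n * ramanujan (S' \ S) n := by
    rw [inter_comm]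
    exact (prod_inter_mul_prod_sdiff S' S _).symm
  have hprime : ∀ p ∈ S ∩ S', p.Prime := fun p hp => hS p (mem_inter.1 hp).1
  rw [hleft, hright, mul_mul_mul_comm, ramanujan_mul_self hprime,
    ← ramanujan_union disjoint_sdiff_sdiff, sum_mul]
  refine sum_congr rfl fun J hJ => ?_
  have hdisj : Disjoint (symmDiff S S') J :=
    (disjoint_symmDiff_inf S S').mono_right (mem_powerset.1 hJ)
  rw [ramanujan_union hdisj, productCoeff]
  change _ = _ * (ramanujan (S \ S' ∪ S' \ S) n * _)
  ring

end SquareExpansion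

section SelbergWeight

/-- The Selberg weight `(∑ ramanujan S) ^ 2 / selbergSum u Q`, an upper bound sieve of level `Q ^ 2`
removing the multiples of the primes in `(u, Q]`. -/
noncomputable def selbergWeight (u Q : ℕ) (n : ℤ) : ℝ :=
  (∑ S ∈ selbergSupport u Q, ramanujan S n) ^ 2 / selbergSum u Q

/-- The sets of primes which occur in the expansion of `selbergWeight u Q`. -/
def selbergSpectrum (u Q : ℕ) : Finset (Finset ℕ) :=
  {E ∈ (primesIoc u Q).powerset | modulus E ≤ Q ^ 2}

/-- The triples `⟨(S, S'), J⟩` which index the terms obtained by squaring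
`∑ S ∈ selbergSupport u Q, ramanujan S`. -/
def selbergTriples (u Q : ℕ) : Finset ((_ : Finset ℕ × Finset ℕ) × Finset ℕ) :=
  (selbergSupport u Q ×ˢ selbergSupport u Q).sigma fun y => (y.1 ∩ y.2).powerset

/-- The coefficient of `ramanujan E` in the expansion of `selbergWeight u Q`. -/
noncomputable def selbergCoeff (u Q : ℕ) (E : Finset ℕ) : ℝ :=
  (∑ τ ∈ selbergTriples u Q with symmDiff τ.1.1 τ.1.2 ∪ τ.2 = E, productCoeff τ.1.1 τ.1.2 τ.2) /
    selbergSum u Q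

variable {u Q : ℕ}

lemma mem_selbergSpectrum {E : Finset ℕ} :
    E ∈ selbergSpectrum u Q ↔ E ⊆ primesIoc u Q ∧ modulus E ≤ Q ^ 2 := by
  simp [selbergSpectrum]

lemma mem_selbergTriples {τ : (_ : Finset ℕ × Finset ℕ) × Finset ℕ} :
    τ ∈ selbergTriples u Q ↔
      (τ.1.1 ∈ selbergSupport u Q ∧ τ.1.2 ∈ selbergSupport u Q) ∧ τ.2 ⊆ τ.1.1 ∩ τ.1.2 := by
  simp only [selbergTriples, mem_sigma, mem_product, mem_powerset]

lemma modulus_mono {S S' : Finset ℕ} (hS' : ∀ p ∈ S', p.Prime) (h : S ⊆ S') :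
    modulus S ≤ modulus S' :=
  Nat.le_of_dvd (modulus_pos hS') (prod_dvd_prod_of_subset _ _ _ h)

lemma le_modulus_of_mem {S : Finset ℕ} (hS : ∀ p ∈ S, p.Prime) {p : ℕ} (hp : p ∈ S) :
    p ≤ modulus S :=
  Nat.le_of_dvd (modulus_pos hS) (dvd_prod_of_mem (fun p => p) hp)

lemma modulus_union_le {S S' : Finset ℕ} (hS : ∀ p ∈ S, p.Prime) :
    modulus (S ∪ S') ≤ modulus S * modulus S' := by
  have h : modulus (S ∪ S') * modulus (S ∩ S') = modulus S * modulus S' := prod_union_inter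
  rw [← h]
  exact Nat.le_mul_of_pos_right _ (modulus_pos fun p hp => hS p (mem_inter.1 hp).1)

lemma symmDiff_union_mem_selbergSpectrum {τ : (_ : Finset ℕ × Finset ℕ) × Finset ℕ}
    (hτ : τ ∈ selbergTriples u Q) : symmDiff τ.1.1 τ.1.2 ∪ τ.2 ∈ selbergSpectrum u Q := by
  obtain ⟨⟨hS, hS'⟩, hJ⟩ := mem_selbergTriples.1 hτ
  have hprime := prime_of_mem_selbergSupport hS
  rw [mem_selbergSupport] at hS hS'
  have hunion : τ.1.1 ∪ τ.1.2 ⊆ primesIoc u Q := union_subset hS.1 hS'.1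
  have hsub : symmDiff τ.1.1 τ.1.2 ∪ τ.2 ⊆ τ.1.1 ∪ τ.1.2 :=
    union_subset symmDiff_le_sup (hJ.trans inf_le_sup)
  refine mem_selbergSpectrum.2 ⟨hsub.trans hunion, ?_⟩
  calc modulus (symmDiff τ.1.1 τ.1.2 ∪ τ.2) ≤ modulus (τ.1.1 ∪ τ.1.2) :=
        modulus_mono (prime_of_subset_primesIoc hunion) hsub
    _ ≤ modulus τ.1.1 * modulus τ.1.2 := modulus_union_le hprime
    _ ≤ Q ^ 2 := sq Q ▸ Nat.mul_le_mul hS.2 hS'.2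

lemma selbergWeight_eq_sum (u Q : ℕ) (n : ℤ) :
    selbergWeight u Q n = ∑ E ∈ selbergSpectrum u Q, selbergCoeff u Q E * ramanujan E n := by
  have hsq : (∑ S ∈ selbergSupport u Q, ramanujan S n) ^ 2 =
      ∑ τ ∈ selbergTriples u Q,
        productCoeff τ.1.1 τ.1.2 τ.2 * ramanujan (symmDiff τ.1.1 τ.1.2 ∪ τ.2) n := by
    rw [sq, sum_mul_sum, ← sum_product', selbergTriples, sum_sigma]
    exact sum_congr rfl fun y hy =>
      ramanujan_mul (prime_of_mem_selbergSupport (mem_product.1 hy).1) y.2 n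
  rw [selbergWeight, hsq, sum_div,
    ← sum_fiberwise_of_maps_to (fun τ hτ => symmDiff_union_mem_selbergSpectrum hτ)]
  refine sum_congr rfl fun E _ => ?_
  rw [selbergCoeff, sum_div, sum_mul]
  refine sum_congr rfl fun τ hτ => ?_
  rw [(mem_filter.1 hτ).2, div_mul_eq_mul_div]

lemma abs_productCoeff_le {S : Finset ℕ} (hS : ∀ p ∈ S, p.Prime) {S' J : Finset ℕ}
    (hJ : J ⊆ S ∩ S') : |productCoeff S S' J| ≤ invTotient ((S ∩ S') \ J) := by
  have hprime : ∀ p ∈ S ∩ S', p.Prime := fun p hp => hS p (mem_inter.1 hp).1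
  have hnonneg : 0 ≤ invTotient ((S ∩ S') \ J) :=
    invTotient_nonneg fun p hp => hprime p (mem_sdiff.1 hp).1
  rw [productCoeff, abs_mul, abs_of_nonneg hnonneg, abs_prod]
  exact mul_le_of_le_one_left hnonneg
    (prod_le_one (fun _ _ => abs_nonneg _) fun p hp => abs_squareCoeff_le (hprime p (hJ hp)))

lemma sdiff_mem_selbergSupport {S S' J : Finset ℕ} (hS : S ∈ selbergSupport u Q) :
    (S ∩ S') \ J ∈ selbergSupport u Q := by
  have hsub : (S ∩ S') \ J ⊆ S := sdiff_subset.trans inter_subset_left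
  have hprime := prime_of_mem_selbergSupport hS
  rw [mem_selbergSupport] at hS ⊢
  exact ⟨hsub.trans hS.1, (modulus_mono hprime hsub).trans hS.2⟩

lemma injOn_selbergTriples_fiber (u Q : ℕ) (E : Finset ℕ) :
    Set.InjOn (fun τ : (_ : Finset ℕ × Finset ℕ) × Finset ℕ =>
        (τ.1.1 \ τ.1.2, τ.1.2 \ τ.1.1, (τ.1.1 ∩ τ.1.2) \ τ.2))
      ({τ ∈ selbergTriples u Q | symmDiff τ.1.1 τ.1.2 ∪ τ.2 = E} : Finset _) := by
  rintro ⟨⟨S, S'⟩, J⟩ hτ ⟨⟨R, R'⟩, K⟩ hτ' h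
  obtain ⟨hτ, hE⟩ := mem_filter.1 (mem_coe.1 hτ)
  obtain ⟨hτ', hE'⟩ := mem_filter.1 (mem_coe.1 hτ')
  have hJ := (mem_selbergTriples.1 hτ).2
  have hK := (mem_selbergTriples.1 hτ').2
  have hEE := hE.trans hE'.symm
  simp only [Prod.mk.injEq, Sigma.mk.injEq, heq_eq_eq, Finset.ext_iff, subset_iff, mem_union,
    mem_symmDiff, mem_inter, Finset.mem_sdiff] at h hJ hK hEE ⊢
  grind

/- The triples with a given `E` are counted by the pair `(S \ S', S' \ S)` of subsets of `E`; the
remaining datum `(S ∩ S') \ J` runs through `selbergSupport u Q` and reproduces `selbergSum u Q`. -/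
lemma abs_selbergCoeff_le (hQ : 1 ≤ Q) (E : Finset ℕ) : |selbergCoeff u Q E| ≤ 4 ^ #E := by
  have hpos : 0 < selbergSum u Q := one_pos.trans_le (one_le_selbergSum hQ)
  rw [selbergCoeff, abs_div, abs_of_pos hpos, div_le_iff₀ hpos]
  calc _ ≤ ∑ τ ∈ selbergTriples u Q with symmDiff τ.1.1 τ.1.2 ∪ τ.2 = E,
        invTotient ((τ.1.1 ∩ τ.1.2) \ τ.2) := by
        refine (abs_sum_le_sum_abs _ _).trans (sum_le_sum fun τ hτ => ?_)
        obtain ⟨⟨hS, _⟩, hJ⟩ := mem_selbergTriples.1 (mem_filter.1 hτ).1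
        exact abs_productCoeff_le (prime_of_mem_selbergSupport hS) hJ
    _ ≤ ∑ y ∈ E.powerset ×ˢ E.powerset ×ˢ selbergSupport u Q, invTotient y.2.2 := by
        rw [← sum_image (f := fun y : Finset ℕ × Finset ℕ × Finset ℕ => invTotient y.2.2)
          (injOn_selbergTriples_fiber u Q E)]
        refine sum_le_sum_of_subset_of_nonneg (image_subset_iff.2 fun τ hτ => ?_) fun y hy _ => ?_
        · obtain ⟨hmem, rfl⟩ := mem_filter.1 hτ
          have hS := (mem_selbergTriples.1 hmem).1.1
          simp only [mem_product, mem_powerset]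
          exact ⟨le_sup_left.trans subset_union_left, le_sup_right.trans subset_union_left,
            sdiff_mem_selbergSupport hS⟩
        · simp only [mem_product] at hy
          exact invTotient_nonneg (prime_of_mem_selbergSupport hy.2.2)
    _ = 4 ^ #E * selbergSum u Q := by
        simp only [sum_product, sum_const, nsmul_eq_mul, card_powerset, selbergSum, ← mul_assoc]
        rw [← Nat.cast_mul, ← mul_pow]
        norm_num

lemma selbergCoeff_empty (hQ : 1 ≤ Q) : selbergCoeff u Q ∅ = 1 := by
  have hpos : 0 < selbergSum u Q := one_pos.trans_le (one_le_selbergSum hQ)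
  rw [selbergCoeff, div_eq_one_iff_eq hpos.ne', selbergSum]
  have hdiag : ∀ τ : (_ : Finset ℕ × Finset ℕ) × Finset ℕ,
      symmDiff τ.1.1 τ.1.2 ∪ τ.2 = ∅ → τ = ⟨(τ.1.1, τ.1.1), ∅⟩ := by
    rintro ⟨⟨S, S'⟩, J⟩ h
    obtain ⟨hSS', hJ⟩ := union_eq_empty.1 h
    obtain rfl : S = S' := symmDiff_eq_bot.1 hSS'
    obtain rfl : J = ∅ := hJ
    rfl
  refine sum_nbij' (fun τ => τ.1.1) (fun S => ⟨(S, S), ∅⟩) (fun τ hτ => ?_) (fun S hS => ?_)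
    (fun τ hτ => (hdiag τ (mem_filter.1 hτ).2).symm) (fun S _ => rfl) fun τ hτ => ?_
  · exact (mem_selbergTriples.1 (mem_filter.1 hτ).1).1.1
  · simp [mem_selbergTriples, hS]
  · rw [hdiag τ (mem_filter.1 hτ).2]
    simp [productCoeff]

lemma selbergWeight_sub_one_eq_sum (hQ : 1 ≤ Q) (n : ℤ) :
    selbergWeight u Q n - 1 =
      ∑ E ∈ (selbergSpectrum u Q).erase ∅, selbergCoeff u Q E * ramanujan E n := by
  have hempty : ∅ ∈ selbergSpectrum u Q :=
    mem_selbergSpectrum.2 ⟨empty_subset _, Nat.one_le_pow _ _ hQ⟩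
  rw [selbergWeight_eq_sum, ← add_sum_erase _ _ hempty, selbergCoeff_empty hQ]
  simp [ramanujan]

lemma selbergWeight_nonneg (hQ : 1 ≤ Q) (n : ℤ) : 0 ≤ selbergWeight u Q n :=
  div_nonneg (sq_nonneg _) (zero_le_one.trans (one_le_selbergSum hQ))

lemma primeRamanujan_of_prime_lt {p q : ℕ} (hp : p.Prime) (hq : q.Prime) (h : q < p) :
    primeRamanujan q p = 1 / ((q : ℝ) - 1) :=
  if_neg (by rw [Int.natCast_dvd_natCast, Nat.prime_dvd_prime_iff_eq hq hp]; exact h.ne)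

lemma selbergWeight_prime {p : ℕ} (hp : p.Prime) (h : Q < p) :
    selbergWeight u Q p = selbergSum u Q := by
  have hsum : ∑ S ∈ selbergSupport u Q, ramanujan S p = selbergSum u Q := by
    refine sum_congr rfl fun S hS => prod_congr rfl fun q hq => ?_
    obtain ⟨⟨-, hqQ⟩, hq'⟩ := mem_primesIoc.1 ((mem_selbergSupport.1 hS).1 hq)
    exact primeRamanujan_of_prime_lt hp hq' (hqQ.trans_lt h)
  rw [selbergWeight, hsum, sq, mul_self_div_self]

end SelbergWeight

section SieveWeight

/-- The density of the integers free of prime factors in `(w, u]`, normalised to have mean one. -/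
noncomputable def sieveWeight (w u : ℕ) (n : ℤ) : ℝ := ∏ p ∈ primesIoc w u, (1 + primeRamanujan p n)

lemma sieveWeight_eq_sum (w u : ℕ) (n : ℤ) :
    sieveWeight w u n = ∑ R ∈ (primesIoc w u).powerset, ramanujan R n :=
  prod_one_add _

lemma sieveWeight_nonneg (w u : ℕ) (n : ℤ) : 0 ≤ sieveWeight w u n :=
  prod_nonneg fun p hp => by
    linarith [(abs_le.1 (abs_primeRamanujan_le (mem_primesIoc.1 hp).2 n)).1]

lemma sieveWeight_prime (w : ℕ) {u p : ℕ} (hp : p.Prime) (h : u < p) :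
    sieveWeight w u p = ∏ q ∈ primesIoc w u, eulerFactor q := by
  refine prod_congr rfl fun q hq => ?_
  obtain ⟨⟨-, hqu⟩, hq'⟩ := mem_primesIoc.1 hq
  rw [primeRamanujan_of_prime_lt hp hq' (hqu.trans_lt h), eulerFactor_eq hq'.two_le]

lemma log_le_prod_eulerFactor_mul_weights {w u Q p : ℕ} (hwu : w ≤ u) (huQ : u ≤ Q) (hQ : 1 ≤ Q)
    (hp : p.Prime) (h : Q < p) :
    Real.log Q ≤
      (∏ q ∈ primesIoc 0 w, eulerFactor q) * (sieveWeight w u p * selbergWeight u Q p) := by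
  rw [selbergWeight_prime hp h, sieveWeight_prime w hp (huQ.trans_lt h), ← mul_assoc,
    prod_primesIoc_consecutive eulerFactor w.zero_le hwu, mul_comm]
  exact log_le_selbergSum_mul_prod_eulerFactor u hQ

lemma primesIoc_subset_primesIoc (w : ℕ) {u v : ℕ} (huv : u ≤ v) :
    primesIoc w u ⊆ primesIoc w v :=
  filter_subset_filter _ (Ioc_subset_Ioc_right huv)

lemma hasRamanujanExpansion_sieveWeight_sub (w : ℕ) {u v : ℕ} (huv : u ≤ v) :
    HasRamanujanExpansion u (modulus (primesIoc w v))
      (fun n => sieveWeight w v n - sieveWeight w u n) := by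
  have hprime := prime_of_subset_primesIoc (subset_refl (primesIoc w v))
  refine ⟨(primesIoc w v).powerset \ (primesIoc w u).powerset, fun _ => 1, fun S hS => ?_,
    fun n => ?_⟩
  · simp only [Finset.mem_sdiff, mem_powerset] at hS
    have hSprime := prime_of_subset_primesIoc hS.1
    obtain ⟨p, hpS, hpu⟩ := not_subset.1 hS.2
    have hup : u < p := by
      have := mem_primesIoc.1 (hS.1 hpS)
      by_contra! hle
      exact hpu (mem_primesIoc.2 ⟨⟨this.1.1, hle⟩, this.2⟩)
    refine ⟨hSprime, hup.le.trans (le_modulus_of_mem hSprime hpS), modulus_mono hprime hS.1, ?_⟩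
    rw [abs_one]
    exact one_le_pow₀ (by norm_num)
  · beta_reduce
    simp_rw [one_mul]
    rw [sieveWeight_eq_sum, sieveWeight_eq_sum, sub_eq_iff_eq_add]
    exact (sum_sdiff (powerset_mono.2 (primesIoc_subset_primesIoc w huv))).symm

lemma union_inter_primesIoc_left {w u Q : ℕ} {R E : Finset ℕ} (hR : R ⊆ primesIoc w u)
    (hE : E ⊆ primesIoc u Q) : (R ∪ E) ∩ primesIoc w u = R := by
  rw [Finset.union_inter_distrib_right, inter_eq_left.2 hR,
    disjoint_iff_inter_eq_empty.1 (disjoint_of_subset_primesIoc le_rfl subset_rfl hE).symm,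
    union_empty]

lemma union_inter_primesIoc_right {w u Q : ℕ} {R E : Finset ℕ} (hR : R ⊆ primesIoc w u)
    (hE : E ⊆ primesIoc u Q) : (R ∪ E) ∩ primesIoc u Q = E := by
  rw [Finset.union_inter_distrib_right, inter_eq_left.2 hE,
    disjoint_iff_inter_eq_empty.1 (disjoint_of_subset_primesIoc le_rfl hR subset_rfl), empty_union]

lemma hasRamanujanExpansion_sieveWeight_mul (w u : ℕ) {Q : ℕ} (hQ : 1 ≤ Q) :
    HasRamanujanExpansion u (modulus (primesIoc w u) * Q ^ 2)
      (fun n => sieveWeight w u n * (selbergWeight u Q n - 1)) := by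
  set I := (primesIoc w u).powerset ×ˢ (selbergSpectrum u Q).erase ∅ with hI
  have hmem : ∀ y ∈ I, (y.1 ⊆ primesIoc w u ∧ y.2 ⊆ primesIoc u Q) ∧ modulus y.2 ≤ Q ^ 2 ∧
      y.2.Nonempty := by
    intro y hy
    rw [hI, mem_product, mem_powerset, mem_erase, mem_selbergSpectrum] at hy
    exact ⟨⟨hy.1, hy.2.2.1⟩, hy.2.2.2, nonempty_iff_ne_empty.2 hy.2.1⟩
  have hinj : Set.InjOn (fun y : Finset ℕ × Finset ℕ => y.1 ∪ y.2) I := by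
    intro y hy z hz (h : y.1 ∪ y.2 = z.1 ∪ z.2)
    obtain ⟨⟨hy1, hy2⟩, -⟩ := hmem y hy
    obtain ⟨⟨hz1, hz2⟩, -⟩ := hmem z hz
    refine Prod.ext ?_ ?_
    · rw [← union_inter_primesIoc_left hy1 hy2, h, union_inter_primesIoc_left hz1 hz2]
    · rw [← union_inter_primesIoc_right hy1 hy2, h, union_inter_primesIoc_right hz1 hz2]
  refine ⟨I.image fun y => y.1 ∪ y.2, fun S => selbergCoeff u Q (S ∩ primesIoc u Q), ?_,
    fun n => ?_⟩
  · refine forall_mem_image.2 fun y hy => ?_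
    obtain ⟨⟨hR, hE⟩, hEQ, p, hp⟩ := hmem y hy
    have hRprime := prime_of_subset_primesIoc hR
    have hprime : ∀ p ∈ y.1 ∪ y.2, p.Prime := fun p hp =>
      (mem_union.1 hp).elim (hRprime p) (prime_of_subset_primesIoc hE p)
    refine ⟨hprime, ?_, ?_, ?_⟩
    · exact (mem_primesIoc.1 (hE hp)).1.1.le.trans
        (le_modulus_of_mem hprime (mem_union_right _ hp))
    · exact (modulus_union_le hRprime).trans
        (Nat.mul_le_mul (modulus_mono (prime_of_subset_primesIoc subset_rfl) hR) hEQ)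
    · exact (abs_selbergCoeff_le hQ _).trans
        (pow_le_pow_right₀ (by norm_num) (card_le_card inter_subset_left))
  · beta_reduce
    rw [sum_image hinj, sieveWeight_eq_sum, selbergWeight_sub_one_eq_sum hQ, sum_mul_sum,
      ← sum_product']
    refine sum_congr rfl fun y hy => ?_
    obtain ⟨⟨hR, hE⟩, -⟩ := hmem y hy
    rw [union_inter_primesIoc_right hR hE,
      ramanujan_union (disjoint_of_subset_primesIoc le_rfl hR hE)]
    ring

lemma modulus_primesIoc_le (w v : ℕ) : modulus (primesIoc w v) ≤ 4 ^ v := by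
  have hprimorial : modulus (primesIoc 0 v) = primorial v := by
    refine prod_congr (Finset.ext fun p => ?_) fun _ _ => rfl
    simp only [mem_primesIoc, mem_filter, mem_range, Nat.lt_succ_iff]
    exact ⟨fun h => ⟨h.1.2, h.2⟩, fun h => ⟨⟨h.2.pos, h.1⟩, h.2⟩⟩
  refine le_trans ?_ (hprimorial ▸ primorial_le_four_pow v)
  exact modulus_mono (prime_of_subset_primesIoc subset_rfl)
    (filter_subset_filter _ (Ioc_subset_Ioc_left w.zero_le))

end SieveWeight

/-! ### Maximal inequalities for the sieve weights -/

section BlockAverages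

variable {X : Type*} {T : X → X}

lemma natCast_mul_weightedAvg (T : X → X) (f : X → ℝ) (a : ℤ → ℝ) (N : ℕ) (x : X) :
    N * weightedAvg T f a N x = ∑ n ∈ range N, a n * f (T^[n] x) := by
  rcases N.eq_zero_or_pos with rfl | hN
  · simp
  · rw [weightedAvg, ← mul_assoc, mul_one_div_cancel (by positivity), one_mul]

lemma sum_range_mul_of_periodic (f : X → ℝ) {g : ℤ → ℝ} {K : ℕ}
    (hg : Function.Periodic g (K : ℤ)) (x : X) (b : ℕ) :
    ∑ n ∈ range (K * b), g n * f (T^[n] x) =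
      K * birkhoffSum T^[K] (weightedAvg T f g K) b x := by
  rw [birkhoffSum, mul_sum]
  simp_rw [natCast_mul_weightedAvg]
  induction b with
  | zero => simp
  | succ b ih =>
    rw [sum_range_succ, ← ih, Nat.mul_succ, sum_range_add]
    congr 1
    refine sum_congr rfl fun m _ => ?_
    have hper : g ((K * b + m : ℕ) : ℤ) = g m := by
      rw [← hg.nat_mul b m]
      congr 1
      push_cast
      ring
    rw [hper, ← Function.iterate_mul, ← Function.iterate_add_apply, add_comm m]

lemma natCast_mul_weightedAvg_le {f : X → ℝ} (hf : ∀ x, |f x| ≤ 1) {g : ℤ → ℝ} {K : ℕ}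
    (hK : 0 < K) (hg : Function.Periodic g (K : ℤ)) {G : ℝ} (hG : ∀ n, |g n| ≤ G) (N : ℕ) (x : X) :
    N * weightedAvg T f g N x ≤
      K * birkhoffSum T^[K] (fun y => |weightedAvg T f g K y|) (N / K) x + K * G := by
  rw [natCast_mul_weightedAvg]
  conv_lhs => rw [← Nat.div_add_mod N K, sum_range_add, sum_range_mul_of_periodic f hg]
  have hterm (n : ℕ) (y : X) : g n * f y ≤ G := by
    refine (le_abs_self _).trans ?_
    rw [abs_mul]
    exact (mul_le_of_le_one_right (abs_nonneg _) (hf y)).trans (hG n)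
  have hG0 : 0 ≤ G := (abs_nonneg _).trans (hG 0)
  gcongr
  · exact sum_le_sum fun q _ => le_abs_self _
  · calc _ ≤ #(range (N % K)) • G := sum_le_card_nsmul _ _ _ fun n _ => hterm _ _
      _ = (N % K : ℕ) * G := by rw [card_range, nsmul_eq_mul]
      _ ≤ K * G := by
          gcongr
          exact (Nat.mod_lt N hK).le

variable [MeasurableSpace X] {μ : Measure X} {f : X → ℝ}

lemma memLp_weightedAvg (hT : MeasurePreserving T μ μ) (hf : MemLp f 2 μ) (a : ℤ → ℝ) (N : ℕ) :
    MemLp (weightedAvg T f a N) 2 μ :=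
  (memLp_finsetSum _ fun n _ => (memLp_comp_iterate hT hf n).const_mul (a n)).const_mul _

lemma measure_exists_lt_weightedAvg_le [IsFiniteMeasure μ] (hT : MeasurePreserving T μ μ)
    (hf : MemLp f 2 μ) (hf1 : ∀ x, |f x| ≤ 1) {g : ℤ → ℝ} {K : ℕ} (hK : 0 < K)
    (hg : Function.Periodic g (K : ℤ)) {G : ℝ} (hG : ∀ n, |g n| ≤ G) {s v : ℝ} (hs : 0 < s)
    {N₀ : ℕ} (hN₀ : 2 * (K * G) ≤ s * N₀) (hv : ∫ x, |weightedAvg T f g K x| ∂μ ≤ v) :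
    μ {x | ∃ N : ℕ, N₀ ≤ N ∧ s < weightedAvg T f g N x} ≤ ENNReal.ofReal (2 * v / s) := by
  have hmax := measure_exists_lt_birkhoffSum_le (hT.iterate K)
    ((memLp_weightedAvg hT hf g K).integrable one_le_two).abs (fun x => abs_nonneg _) (half_pos hs)
  refine (measure_mono ?_).trans (hmax.trans (ENNReal.ofReal_le_ofReal ?_))
  · rintro x ⟨N, hN, hx⟩
    refine ⟨N / K, lt_of_mul_lt_mul_left ?_ K.cast_nonneg⟩
    have hNpos : (0 : ℝ) < N := by
      rcases N.eq_zero_or_pos with rfl | h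
      · simp only [weightedAvg, range_zero, sum_empty, mul_zero] at hx
        exact absurd hx hs.not_gt
      · exact_mod_cast h
    have hdiv : ((K * (N / K) : ℕ) : ℝ) ≤ N := by exact_mod_cast Nat.mul_div_le N K
    have hlarge : s * N₀ ≤ s * N := by gcongr
    calc (K : ℝ) * (s / 2 * ((N / K : ℕ) : ℝ)) = s / 2 * ((K * (N / K) : ℕ) : ℝ) := by
          push_cast
          ring
      _ ≤ s / 2 * N := by gcongr
      _ < _ := by
          linarith [natCast_mul_weightedAvg_le (T := T) hf1 hK hg hG N x,
            mul_lt_mul_of_pos_left hx hNpos]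
  · rw [div_div_eq_mul_div, mul_comm]
    gcongr

end BlockAverages

section SieveDifferences

lemma sieveWeight_le_modulus (w u : ℕ) (n : ℤ) : sieveWeight w u n ≤ modulus (primesIoc w u) := by
  rw [sieveWeight, modulus, Nat.cast_prod]
  refine prod_le_prod (fun p hp => ?_) fun p hp => ?_ <;>
    have hprime := (mem_primesIoc.1 hp).2 <;>
    have hbound := abs_le.1 (abs_primeRamanujan_le hprime n)
  · linarith
  · have : (2 : ℝ) ≤ p := by exact_mod_cast hprime.two_le
    linarith

lemma sieveWeight_periodic {w u : ℕ} {t : ℤ} (h : (modulus (primesIoc w u) : ℤ) ∣ t) :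
    Function.Periodic (sieveWeight w u) t := fun n => by
  rw [sieveWeight_eq_sum, sieveWeight_eq_sum]
  refine sum_congr rfl fun S hS => ramanujan_add_of_dvd (dvd_trans ?_ h) n
  exact Int.natCast_dvd_natCast.2 (prod_dvd_prod_of_subset _ _ _ (mem_powerset.1 hS))

/-- The increment of the sieve weights between the consecutive levels `256 ^ (j₀ + k)` and
`256 ^ (j₀ + k + 1)`, when the primes up to `256 ^ j₀` are left unsieved. -/
noncomputable def sieveDiff (j₀ k : ℕ) (n : ℤ) : ℝ :=
  sieveWeight (256 ^ j₀) (256 ^ (j₀ + k + 1)) n - sieveWeight (256 ^ j₀) (256 ^ (j₀ + k)) n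

/-- The product of all primes in `(256 ^ j₀, 256 ^ (j₀ + k + 1)]`, a period of `sieveDiff j₀ k`. -/
def sieveModulus (j₀ k : ℕ) : ℕ := modulus (primesIoc (256 ^ j₀) (256 ^ (j₀ + k + 1)))

variable (j₀ k : ℕ)

lemma sieveLevel_le_succ : 256 ^ (j₀ + k) ≤ 256 ^ (j₀ + k + 1) :=
  Nat.pow_le_pow_right (by norm_num) (Nat.le_succ _)

lemma sieveModulus_pos : 0 < sieveModulus j₀ k :=
  modulus_pos (prime_of_subset_primesIoc subset_rfl)

lemma abs_sieveDiff_le (n : ℤ) : |sieveDiff j₀ k n| ≤ sieveModulus j₀ k := by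
  have hsub := primesIoc_subset_primesIoc (256 ^ j₀) (sieveLevel_le_succ j₀ k)
  refine abs_sub_le_of_nonneg_of_le (sieveWeight_nonneg _ _ n) (sieveWeight_le_modulus _ _ n)
    (sieveWeight_nonneg _ _ n) ((sieveWeight_le_modulus _ _ n).trans ?_)
  exact_mod_cast modulus_mono (prime_of_subset_primesIoc subset_rfl) hsub

lemma sieveDiff_periodic {t : ℕ} (h : sieveModulus j₀ k ∣ t) :
    Function.Periodic (sieveDiff j₀ k) (t : ℤ) := by
  have hsub := primesIoc_subset_primesIoc (256 ^ j₀) (sieveLevel_le_succ j₀ k)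
  refine (sieveWeight_periodic ?_).sub (sieveWeight_periodic ?_) <;> rw [Int.natCast_dvd_natCast]
  · exact h
  · exact (prod_dvd_prod_of_subset _ _ _ hsub).trans h

variable {j₀}

lemma block_exponent_le {i : ℕ} (hi : 8 ≤ i) : 36 * 256 ^ (i + 1) + (i + 4) ≤ 512 ^ (i + 1) := by
  have hsplit : 512 ^ (i + 1) = 2 ^ (i + 1) * 256 ^ (i + 1) := by rw [← mul_pow]; norm_num
  have htwo : 2 ^ 9 ≤ 2 ^ (i + 1) := Nat.pow_le_pow_right two_pos (by lia)
  have hlin : i + 1 < 256 ^ (i + 1) := Nat.lt_pow_self (by norm_num)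
  have := Nat.mul_le_mul_right (256 ^ (i + 1)) htwo
  lia

lemma sieveModulus_pow_le (hj : 8 ≤ j₀) :
    2 * (sieveModulus j₀ k ^ 17 * sieveModulus j₀ k) * 2 ^ (j₀ + k + 3) ≤
      2 ^ 512 ^ (j₀ + k + 1) := by
  calc 2 * (sieveModulus j₀ k ^ 17 * sieveModulus j₀ k) * 2 ^ (j₀ + k + 3)
      = sieveModulus j₀ k ^ 18 * 2 ^ (j₀ + k + 4) := by ring
    _ ≤ (4 ^ 256 ^ (j₀ + k + 1)) ^ 18 * 2 ^ (j₀ + k + 4) := by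
        gcongr
        exact modulus_primesIoc_le _ _
    _ = 2 ^ (36 * 256 ^ (j₀ + k + 1) + (j₀ + k + 4)) := by
        rw [show 4 = 2 ^ 2 by norm_num, ← pow_mul, ← pow_mul, ← pow_add]
        congr 1
        ring
    _ ≤ _ := Nat.pow_le_pow_right two_pos (block_exponent_le (by lia))

lemma two_mul_sieveModulus_pow_le (hj : 8 ≤ j₀) {s : ℝ} (hs : (1 / 2 : ℝ) ^ j₀ ≤ s) :
    2 * (((sieveModulus j₀ k ^ 17 : ℕ) : ℝ) * sieveModulus j₀ k) ≤
      s / 3 * (1 / 2) ^ (k + 1) * ((2 ^ 512 ^ (j₀ + k + 1) : ℕ) : ℝ) := by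
  have hthreshold : (1 / 2 : ℝ) ^ (j₀ + k + 3) ≤ s / 3 * (1 / 2) ^ (k + 1) :=
    calc (1 / 2 : ℝ) ^ (j₀ + k + 3) = (1 / 2) ^ j₀ * (1 / 4) * (1 / 2) ^ (k + 1) := by ring
      _ ≤ s / 3 * (1 / 2) ^ (k + 1) := by
          have : (0 : ℝ) < (1 / 2) ^ j₀ := by positivity
          gcongr
          linarith
  refine le_trans ?_ (mul_le_mul_of_nonneg_right hthreshold (by positivity))
  rw [one_div, inv_pow, inv_mul_eq_div, le_div_iff₀ (by positivity)]
  exact_mod_cast sieveModulus_pow_le k hj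

variable {X : Type*} [MeasurableSpace X] {μ : Measure X} [IsProbabilityMeasure μ] {T : X → X}
  {f : X → ℝ} {α : ℝ}

lemma natCast_four_pow_pow_five (i : ℕ) : ((4 ^ i : ℕ) : ℝ) ^ 5 = 1024 ^ i := by
  push_cast
  rw [← pow_mul, mul_comm, pow_mul]
  norm_num

lemma integral_abs_weightedAvg_sieveDiff_le (hT : MeasurePreserving T μ μ) (hf : MemLp f 2 μ)
    (hfα : ∫ x, f x ^ 2 ∂μ ≤ α) (hα : (1 / 2 : ℝ) ^ j₀ ≤ α) :
    ∫ x, |weightedAvg T f (sieveDiff j₀ k) (sieveModulus j₀ k ^ 17) x| ∂μ ≤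
      l2Const * α * (1 / 4) ^ k := by
  have hC := four_le_l2Const
  have hα0 : 0 < α := lt_of_lt_of_le (by positivity) hα
  have hexp : HasRamanujanExpansion ((4 ^ (j₀ + k)) ^ 4) (sieveModulus j₀ k) (sieveDiff j₀ k) := by
    rw [pow_right_comm, show 4 ^ 4 = 256 by norm_num]
    exact hasRamanujanExpansion_sieveWeight_sub _ (sieveLevel_le_succ j₀ k)
  refine integral_abs_le_of_integral_sq_le (memLp_weightedAvg hT hf _ _) (by positivity) ?_
  have hgain : ((1024 : ℝ) ^ (j₀ + k))⁻¹ ≤ α * ((1 / 4) ^ k) ^ 2 :=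
    calc ((1024 : ℝ) ^ (j₀ + k))⁻¹ = (1 / 1024) ^ j₀ * (1 / 1024) ^ k := by
          rw [← inv_pow, inv_eq_one_div, pow_add]
      _ ≤ (1 / 2) ^ j₀ * (1 / 16) ^ k := by gcongr <;> norm_num
      _ ≤ α * (1 / 16) ^ k := by gcongr
      _ = α * ((1 / 4) ^ k) ^ 2 := by rw [pow_right_comm]; norm_num
  calc ∫ x, weightedAvg T f (sieveDiff j₀ k) (sieveModulus j₀ k ^ 17) x ^ 2 ∂μ
      ≤ l2Const * (∫ x, f x ^ 2 ∂μ) / ((4 ^ (j₀ + k) : ℕ) : ℝ) ^ 5 :=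
        hexp.integral_sq_weightedAvg_le hT hf (Nat.one_le_pow _ _ (by norm_num)) le_rfl
    _ ≤ l2Const * α * (α * ((1 / 4) ^ k) ^ 2) := by
        rw [natCast_four_pow_pow_five, div_eq_mul_inv]
        gcongr
    _ = l2Const * (α * (1 / 4) ^ k) ^ 2 := by ring
    _ ≤ l2Const ^ 2 * (α * (1 / 4) ^ k) ^ 2 := by
        gcongr
        exact le_self_pow₀ (by linarith) two_ne_zero
    _ = _ := by ring

lemma measure_exists_lt_weightedAvg_sieveDiff_le (hT : MeasurePreserving T μ μ) (hf : MemLp f 2 μ)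
    (hf1 : ∀ x, |f x| ≤ 1) (hfα : ∫ x, f x ^ 2 ∂μ ≤ α) (hj : 8 ≤ j₀) (hα : (1 / 2 : ℝ) ^ j₀ ≤ α)
    {s : ℝ} (hs : α ≤ s) :
    μ {x | ∃ n : ℕ, 512 ^ (j₀ + k + 1) ≤ n ∧
        s / 3 * (1 / 2) ^ (k + 1) < weightedAvg T f (sieveDiff j₀ k) (2 ^ n) x} ≤
      ENNReal.ofReal (12 * l2Const * α / s * (1 / 2) ^ k) := by
  have hs0 : 0 < s := lt_of_lt_of_le (by positivity) (hα.trans hs)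
  have hmax := measure_exists_lt_weightedAvg_le hT hf hf1 (pow_pos (sieveModulus_pos j₀ k) 17)
    (sieveDiff_periodic j₀ k (dvd_pow_self _ (by norm_num))) (abs_sieveDiff_le j₀ k)
    (by positivity : 0 < s / 3 * (1 / 2) ^ (k + 1))
    (two_mul_sieveModulus_pow_le k hj (hα.trans hs))
    (integral_abs_weightedAvg_sieveDiff_le k hT hf hfα hα)
  refine (measure_mono ?_).trans (hmax.trans_eq (congrArg _ ?_))
  · rintro x ⟨n, hn, hx⟩
    exact ⟨2 ^ n, Nat.pow_le_pow_right two_pos hn, hx⟩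
  · rw [show (1 / 4 : ℝ) ^ k = (1 / 2) ^ k * (1 / 2) ^ k by rw [← mul_pow]; norm_num, pow_succ]
    field_simp
    ring

end SieveDifferences

section SieveErrors

/-- The error made in replacing the weight of the Selberg sieve at the primes of
`(256 ^ j, 2 ^ (n / 64)]` by its mean value `1`, in averages of length `2 ^ n`. -/
noncomputable def sieveError (j₀ j n : ℕ) (m : ℤ) : ℝ :=
  sieveWeight (256 ^ j₀) (256 ^ j) m * (selbergWeight (256 ^ j) (2 ^ (n / 64)) m - 1)

lemma two_mul_sieveLevel_le {n j : ℕ} (hj : 9 ≤ j) (h : 512 ^ j ≤ n) : 2 * 256 ^ j ≤ n / 64 := by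
  have hsplit : 512 ^ j = 2 ^ j * 256 ^ j := by rw [← mul_pow]; norm_num
  have htwo : 2 ^ 9 ≤ 2 ^ j := Nat.pow_le_pow_right two_pos hj
  have := Nat.mul_le_mul_right (256 ^ j) htwo
  rw [Nat.le_div_iff_mul_le (by norm_num)]
  lia

variable {j₀ k : ℕ}

lemma modulus_primesIoc_sieveLevel_le {n : ℕ} (hj : 8 ≤ j₀) (h : k = 0 ∨ 512 ^ (j₀ + k) ≤ n) :
    modulus (primesIoc (256 ^ j₀) (256 ^ (j₀ + k))) ≤ 2 ^ (n / 64) := by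
  rcases k.eq_zero_or_pos with rfl | hk
  · simp only [primesIoc, modulus, add_zero, Ioc_self, filter_empty, prod_empty]
    exact Nat.one_le_two_pow
  · refine (modulus_primesIoc_le _ _).trans ?_
    rw [show 4 = 2 ^ 2 by norm_num, ← pow_mul]
    exact Nat.pow_le_pow_right two_pos
      (two_mul_sieveLevel_le (by lia) (h.resolve_left hk.ne'))

lemma hasRamanujanExpansion_sieveError {n : ℕ} (hj : 8 ≤ j₀) (h : k = 0 ∨ 512 ^ (j₀ + k) ≤ n) :
    HasRamanujanExpansion ((4 ^ (j₀ + k)) ^ 4) (2 ^ (3 * (n / 64)))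
      (sieveError j₀ (j₀ + k) n) := by
  rw [pow_right_comm, show 4 ^ 4 = 256 by norm_num]
  obtain ⟨𝓢, B, hS, hsum⟩ := hasRamanujanExpansion_sieveWeight_mul (256 ^ j₀) (256 ^ (j₀ + k))
    (Q := 2 ^ (n / 64)) Nat.one_le_two_pow
  refine ⟨𝓢, B, fun S hSmem => ?_, hsum⟩
  obtain ⟨hprime, hlower, hupper, hB⟩ := hS S hSmem
  refine ⟨hprime, hlower, hupper.trans ?_, hB⟩
  calc _ ≤ 2 ^ (n / 64) * (2 ^ (n / 64)) ^ 2 :=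
        Nat.mul_le_mul_right _ (modulus_primesIoc_sieveLevel_le hj h)
    _ = 2 ^ (3 * (n / 64)) := by ring

variable {X : Type*} [MeasurableSpace X] {μ : Measure X} {T : X → X} {f : X → ℝ} {α s : ℝ}

lemma measure_lt_weightedAvg_sieveError_le (hT : MeasurePreserving T μ μ) (hf : MemLp f 2 μ)
    (hfα : ∫ x, f x ^ 2 ∂μ ≤ α) {n : ℕ} (hj : 8 ≤ j₀) (h : k = 0 ∨ 512 ^ (j₀ + k) ≤ n)
    (hs : 0 < s) :
    μ {x | s / 3 < weightedAvg T f (sieveError j₀ (j₀ + k) n) (2 ^ n) x} ≤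
      ENNReal.ofReal (9 * l2Const * α / s ^ 2 * (1 / 1024) ^ (j₀ + k)) := by
  have hC := four_le_l2Const
  have hL2 := (hasRamanujanExpansion_sieveError hj h).integral_sq_weightedAvg_le (N := 2 ^ n) hT hf
    (Nat.one_le_pow _ _ (by norm_num)) (by
      rw [← pow_mul]
      exact Nat.pow_le_pow_right two_pos (by lia))
  refine (measure_lt_le_integral_sq_div (memLp_weightedAvg hT hf _ _)
    (by positivity : 0 < s / 3)).trans (ENNReal.ofReal_le_ofReal ?_)
  rw [natCast_four_pow_pow_five] at hL2
  calc _ ≤ l2Const * α / 1024 ^ (j₀ + k) / (s / 3) ^ 2 := by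
        gcongr
        exact hL2.trans (by gcongr)
    _ = _ := by
        rw [one_div, inv_pow]
        field_simp
        norm_num

lemma measure_exists_lt_weightedAvg_sieveError_le (hT : MeasurePreserving T μ μ)
    (hf : MemLp f 2 μ) (hfα : ∫ x, f x ^ 2 ∂μ ≤ α) (hj : 8 ≤ j₀) (hα : (1 / 2 : ℝ) ^ j₀ ≤ α)
    (hs : α ≤ s) (k : ℕ) :
    μ {x | ∃ n < 512 ^ (j₀ + k + 1), (k = 0 ∨ 512 ^ (j₀ + k) ≤ n) ∧
        s / 3 < weightedAvg T f (sieveError j₀ (j₀ + k) n) (2 ^ n) x} ≤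
      ENNReal.ofReal (4608 * l2Const * α / s * (1 / 2) ^ k) := by
  have hα0 : 0 < α := lt_of_lt_of_le (by positivity) hα
  have hs0 : 0 < s := hα0.trans_le hs
  have hC : 0 < l2Const := four_pos.trans_le four_le_l2Const
  set b := 9 * l2Const * α / s ^ 2 * (1 / 1024) ^ (j₀ + k) with hb
  set I : Finset ℕ := {n ∈ range (512 ^ (j₀ + k + 1)) | k = 0 ∨ 512 ^ (j₀ + k) ≤ n}
  have hcard : (#I : ℝ) ≤ 512 ^ (j₀ + k + 1) := by
    exact_mod_cast (card_filter_le _ _).trans_eq (card_range (512 ^ (j₀ + k + 1)))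
  have hcount : 512 ^ (j₀ + k + 1) * b ≤ 4608 * l2Const * α / s * (1 / 2) ^ k :=
    calc 512 ^ (j₀ + k + 1) * b
        = 4608 * l2Const * α / s ^ 2 * (512 ^ (j₀ + k) * (1 / 1024) ^ (j₀ + k)) := by
          rw [hb, pow_succ]
          ring
      _ = 4608 * l2Const * α / s ^ 2 * ((1 / 2) ^ j₀ * (1 / 2) ^ k) := by
          rw [← mul_pow, ← pow_add]
          norm_num
      _ ≤ 4608 * l2Const * α / s ^ 2 * (s * (1 / 2) ^ k) := by
          gcongr
          exact hα.trans hs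
      _ = _ := by field_simp
  calc _ ≤ μ (⋃ n ∈ I, {x | s / 3 < weightedAvg T f (sieveError j₀ (j₀ + k) n) (2 ^ n) x}) := by
        refine measure_mono ?_
        rintro x ⟨n, hn, hscale, hx⟩
        exact Set.mem_biUnion (mem_filter.2 ⟨mem_range.2 hn, hscale⟩) hx
    _ ≤ ∑ _n ∈ I, ENNReal.ofReal b := (measure_biUnion_finset_le _ _).trans <| sum_le_sum
        fun n hn => measure_lt_weightedAvg_sieveError_le hT hf hfα hj (mem_filter.1 hn).2 hs0
    _ = ENNReal.ofReal (#I * b) := by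
        rw [sum_const, nsmul_eq_mul, ENNReal.ofReal_mul (Nat.cast_nonneg _),
          ENNReal.ofReal_natCast]
    _ ≤ _ := ENNReal.ofReal_le_ofReal
        ((mul_le_mul_of_nonneg_right hcard (by positivity)).trans hcount)

end SieveErrors

/-! ### Majorising the primes -/

section PrimeMajorant

/-- The sieve majorant of the primes in `(2 ^ (n / 64), 2 ^ n]`: the primes of
`(256 ^ j₀, 256 ^ j]` are removed exactly and those of `(256 ^ j, 2 ^ (n / 64)]` by the Selberg
sieve. It has mean value close to `1`. -/
noncomputable def sieveMajorant (j₀ j n : ℕ) (m : ℤ) : ℝ :=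
  sieveWeight (256 ^ j₀) (256 ^ j) m * selbergWeight (256 ^ j) (2 ^ (n / 64)) m

lemma sieveMajorant_nonneg (j₀ j n : ℕ) (m : ℤ) : 0 ≤ sieveMajorant j₀ j n m :=
  mul_nonneg (sieveWeight_nonneg _ _ m) (selbergWeight_nonneg Nat.one_le_two_pow m)

lemma sieveMajorant_eq (j₀ d n : ℕ) (m : ℤ) :
    sieveMajorant j₀ (j₀ + d) n m =
      1 + ∑ k ∈ range d, sieveDiff j₀ k m + sieveError j₀ (j₀ + d) n m := by
  have htelescope := sum_range_sub (fun k => sieveWeight (256 ^ j₀) (256 ^ (j₀ + k)) m) d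
  have hbase : sieveWeight (256 ^ j₀) (256 ^ j₀) m = 1 := by
    rw [sieveWeight, primesIoc, Ioc_self, filter_empty, prod_empty]
  simp only [← add_assoc, add_zero, hbase] at htelescope
  simp only [sieveMajorant, sieveDiff, sieveError, htelescope]
  ring

lemma prod_eulerFactor_sieveLevel_le {j : ℕ} (hj : 1 ≤ j) :
    ∏ q ∈ primesIoc 0 (256 ^ j), eulerFactor q ≤ 1024 * (j : ℝ) ^ 2 := by
  have hexp : Real.exp 2 ≤ 8 := by
    rw [← one_add_one_eq_two, Real.exp_add]
    nlinarith [Real.exp_one_lt_d9, Real.exp_pos 1]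
  have hprod := prod_eulerFactor_two_pow_le (i := 8 * j) (by lia)
  rw [pow_mul, show 2 ^ 8 = 256 by norm_num] at hprod
  calc _ ≤ 2 * Real.exp 2 * ((8 * j : ℕ) : ℝ) ^ 2 := hprod
    _ ≤ 2 * 8 * ((8 * j : ℕ) : ℝ) ^ 2 := by gcongr
    _ = 1024 * (j : ℝ) ^ 2 := by
        push_cast
        ring

lemma div_le_log_two_pow_div {n : ℕ} (hn : 64 ≤ n) :
    (n : ℝ) / 256 ≤ Real.log ((2 ^ (n / 64) : ℕ) : ℝ) := by
  have hdiv : (n : ℝ) ≤ 128 * ((n / 64 : ℕ) : ℝ) := by exact_mod_cast (by lia : n ≤ 128 * (n / 64))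
  push_cast
  rw [Real.log_pow]
  nlinarith [Real.log_two_gt_d9, ((n / 64).cast_nonneg : (0 : ℝ) ≤ _)]

variable {j₀ k n : ℕ}

lemma sieveLevel_le_two_pow (hj : 8 ≤ j₀) (hn : 1024 * j₀ ≤ n) (h : k = 0 ∨ 512 ^ (j₀ + k) ≤ n) :
    256 ^ (j₀ + k) ≤ 2 ^ (n / 64) := by
  rw [show 256 = 2 ^ 8 by norm_num, ← pow_mul]
  refine Nat.pow_le_pow_right two_pos ?_
  rcases k.eq_zero_or_pos with rfl | hk
  · lia
  · have hlevel := two_mul_sieveLevel_le (by lia) (h.resolve_left hk.ne')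
    have hlin : j₀ + k < 2 ^ (j₀ + k) := Nat.lt_two_pow_self
    have hsplit : 256 ^ (j₀ + k) = 128 ^ (j₀ + k) * 2 ^ (j₀ + k) := by rw [← mul_pow]; norm_num
    have hbase : 128 ^ 1 ≤ 128 ^ (j₀ + k) := Nat.pow_le_pow_right (by norm_num) (by lia)
    have := Nat.mul_le_mul_right (2 ^ (j₀ + k)) hbase
    lia

lemma le_mul_sieveMajorant_of_prime (hj : 8 ≤ j₀) (hn : 1024 * j₀ ≤ n)
    (h : k = 0 ∨ 512 ^ (j₀ + k) ≤ n) {p : ℕ} (hp : p.Prime) (hlt : 2 ^ (n / 64) < p) :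
    (n : ℝ) ≤ 262144 * (j₀ : ℝ) ^ 2 * sieveMajorant j₀ (j₀ + k) n p := by
  have hlevels : 256 ^ j₀ ≤ 256 ^ (j₀ + k) := Nat.pow_le_pow_right (by norm_num) (by lia)
  have hlog := log_le_prod_eulerFactor_mul_weights hlevels (sieveLevel_le_two_pow hj hn h)
    Nat.one_le_two_pow hp hlt
  have hV := prod_eulerFactor_sieveLevel_le (by lia : 1 ≤ j₀)
  have hnonneg := sieveMajorant_nonneg j₀ (j₀ + k) n p
  calc (n : ℝ) = 256 * (n / 256) := by ring
    _ ≤ 256 * ((∏ q ∈ primesIoc 0 (256 ^ j₀), eulerFactor q) *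
          sieveMajorant j₀ (j₀ + k) n p) := by
        gcongr
        exact (div_le_log_two_pow_div (by lia)).trans hlog
    _ ≤ 256 * (1024 * (j₀ : ℝ) ^ 2 * sieveMajorant j₀ (j₀ + k) n p) := by gcongr
    _ = _ := by ring

lemma mul_two_pow_div_le (hj : 8 ≤ j₀) (hn : 1024 * j₀ ≤ n) :
    n * (2 ^ (n / 64) + 1) * 2 ^ j₀ ≤ 2 * 2 ^ n := by
  have hn2 : n ≤ 2 ^ (n / 2 + 1) := by
    have : n / 2 < 2 ^ (n / 2) := Nat.lt_two_pow_self
    rw [pow_succ]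
    lia
  have hn64 : 2 ^ (n / 64) + 1 ≤ 2 ^ (n / 64 + 1) := by
    have : 1 ≤ 2 ^ (n / 64) := Nat.one_le_two_pow
    rw [pow_succ]
    lia
  calc n * (2 ^ (n / 64) + 1) * 2 ^ j₀ ≤ 2 ^ (n / 2 + 1) * 2 ^ (n / 64 + 1) * 2 ^ j₀ := by gcongr
    _ = 2 ^ (n / 2 + 1 + (n / 64 + 1) + j₀) := by rw [← pow_add, ← pow_add]
    _ ≤ 2 ^ n := Nat.pow_le_pow_right two_pos (by lia)
    _ ≤ 2 * 2 ^ n := Nat.le_mul_of_pos_left _ two_pos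

end PrimeMajorant

section PointwiseBounds

variable {X : Type*} {T : X → X} {f : X → ℝ}

lemma weightedAvg_sieveMajorant (T : X → X) (f : X → ℝ) (j₀ d n N : ℕ) (x : X) :
    weightedAvg T f (sieveMajorant j₀ (j₀ + d) n) N x =
      weightedAvg T f 1 N x + ∑ k ∈ range d, weightedAvg T f (sieveDiff j₀ k) N x +
        weightedAvg T f (sieveError j₀ (j₀ + d) n) N x := by
  simp only [weightedAvg, sieveMajorant_eq, add_mul, sum_add_distrib, mul_add, sum_mul,
    Pi.one_apply]
  rw [sum_comm]
  simp only [mul_sum]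

lemma natCast_mul_weightedAvg_one (T : X → X) (f : X → ℝ) (N : ℕ) (x : X) :
    N * weightedAvg T f 1 N x = birkhoffSum T f N x := by
  simp only [natCast_mul_weightedAvg, birkhoffSum, Pi.one_apply, one_mul]

lemma sum_primesUpTo_le_weightedAvg (hf : ∀ x, 0 ≤ f x) {a : ℤ → ℝ} (ha : ∀ m, 0 ≤ a m) {M N : ℕ}
    (hNM : N < M) (x : X) :
    ∑ p ∈ primesUpTo N, a p * f (T^[p] x) ≤ M * weightedAvg T f a M x := by
  rw [natCast_mul_weightedAvg]
  refine sum_le_sum_of_subset_of_nonneg ?_ fun p _ _ => mul_nonneg (ha p) (hf _)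
  exact (filter_subset _ _).trans (range_subset_range.2 hNM)

lemma ergAvg_le_mul_sum (hf : ∀ x, 0 ≤ f x) {N n : ℕ} (hN : 2 ≤ N) (hlt : N < 2 ^ n)
    (hle : 2 ^ n ≤ 2 * N) (x : X) :
    ergAvg T f N x ≤ 20 * n / 2 ^ n * ∑ p ∈ primesUpTo N, f (T^[p] x) := by
  have hN0 : (0 : ℝ) < N := by exact_mod_cast two_pos.trans_le hN
  have hlog : Real.log N ≤ n :=
    calc Real.log N ≤ Real.log (2 ^ n) := Real.log_le_log hN0 (by exact_mod_cast hlt.le)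
      _ = n * Real.log 2 := Real.log_pow _ _
      _ ≤ n := mul_le_of_le_one_right n.cast_nonneg (by linarith [Real.log_two_lt_d9])
  have hle' : (2 : ℝ) ^ n ≤ 2 * N := by exact_mod_cast hle
  have hcount : (N : ℝ) / 10 ≤ #(primesUpTo N) * n :=
    (div_ten_le_card_primesUpTo_mul_log hN).trans (by gcongr)
  have hcard : (0 : ℝ) < #(primesUpTo N) :=
    pos_of_mul_pos_left (lt_of_lt_of_le (by positivity) hcount) n.cast_nonneg
  refine mul_le_mul_of_nonneg_right ?_ (sum_nonneg fun p _ => hf _)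
  rw [inv_eq_one_div, div_le_div_iff₀ hcard (by positivity)]
  linarith

lemma ergAvg_le_weightedAvg_one (hf : ∀ x, 0 ≤ f x) {N n : ℕ} (hN : 2 ≤ N) (hlt : N < 2 ^ n)
    (hle : 2 ^ n ≤ 2 * N) (x : X) : ergAvg T f N x ≤ 20 * n * weightedAvg T f 1 (2 ^ n) x := by
  have hsum := sum_primesUpTo_le_weightedAvg (T := T) hf (a := 1) (fun _ => zero_le_one) hlt x
  simp only [Pi.one_apply, one_mul, Nat.cast_pow, Nat.cast_ofNat] at hsum
  calc ergAvg T f N x ≤ 20 * n / 2 ^ n * ∑ p ∈ primesUpTo N, f (T^[p] x) :=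
        ergAvg_le_mul_sum hf hN hlt hle x
    _ ≤ 20 * n / 2 ^ n * (2 ^ n * weightedAvg T f 1 (2 ^ n) x) := by gcongr
    _ = _ := by field_simp

variable {j₀ k n N : ℕ}

lemma sum_primesUpTo_le_weightedAvg_sieveMajorant (hf0 : ∀ x, 0 ≤ f x) (hf1 : ∀ x, f x ≤ 1)
    (hj : 8 ≤ j₀) (hn : 1024 * j₀ ≤ n) (h : k = 0 ∨ 512 ^ (j₀ + k) ≤ n) (hlt : N < 2 ^ n) (x : X) :
    ∑ p ∈ primesUpTo N, f (T^[p] x) ≤ 2 ^ (n / 64) + 1 + 262144 * (j₀ : ℝ) ^ 2 / n *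
      (2 ^ n * weightedAvg T f (sieveMajorant j₀ (j₀ + k) n) (2 ^ n) x) := by
  set c : ℝ := 262144 * (j₀ : ℝ) ^ 2 / n with hc
  set G := sieveMajorant j₀ (j₀ + k) n
  have hn0 : (0 : ℝ) < n := by exact_mod_cast (by lia : 0 < n)
  have hG (m : ℤ) : 0 ≤ G m := sieveMajorant_nonneg _ _ _ m
  have hterm (p : ℕ) (hp : p ∈ primesUpTo N) :
      f (T^[p] x) ≤ (if p ≤ 2 ^ (n / 64) then 1 else 0) + c * (G p * f (T^[p] x)) := by
    split_ifs with hsmall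
    · have : 0 ≤ c * (G p * f (T^[p] x)) :=
        mul_nonneg (by positivity) (mul_nonneg (hG p) (hf0 _))
      linarith [hf1 (T^[p] x)]
    · have hweight : 1 ≤ c * G p := by
        rw [hc, div_mul_eq_mul_div, one_le_div hn0]
        exact le_mul_sieveMajorant_of_prime hj hn h (mem_filter.1 hp).2 (not_le.1 hsmall)
      rw [zero_add, ← mul_assoc]
      exact le_mul_of_one_le_left (hf0 _) hweight
  have hsmall : ∑ p ∈ primesUpTo N, (if p ≤ 2 ^ (n / 64) then (1 : ℝ) else 0) ≤
      2 ^ (n / 64) + 1 := by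
    rw [sum_boole]
    have hsub : ({p ∈ primesUpTo N | p ≤ 2 ^ (n / 64)} : Finset ℕ) ⊆ range (2 ^ (n / 64) + 1) :=
      fun p hp => mem_range.2 (Nat.lt_succ_of_le (mem_filter.1 hp).2)
    exact_mod_cast (card_le_card hsub).trans_eq (card_range _)
  have hlarge := sum_primesUpTo_le_weightedAvg (T := T) hf0 hG hlt x
  push_cast at hlarge
  refine (sum_le_sum hterm).trans ?_
  rw [sum_add_distrib, ← mul_sum]
  gcongr

lemma ergAvg_le_weightedAvg_sieveMajorant (hf0 : ∀ x, 0 ≤ f x) (hf1 : ∀ x, f x ≤ 1)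
    (hj : 8 ≤ j₀) (hn : 1024 * j₀ ≤ n) (h : k = 0 ∨ 512 ^ (j₀ + k) ≤ n) (hN : 2 ≤ N)
    (hlt : N < 2 ^ n) (hle : 2 ^ n ≤ 2 * N) (x : X) :
    ergAvg T f N x ≤ 40 * (1 / 2) ^ j₀ + 5242880 * (j₀ : ℝ) ^ 2 *
      weightedAvg T f (sieveMajorant j₀ (j₀ + k) n) (2 ^ n) x := by
  have hn0 : (0 : ℝ) < n := by exact_mod_cast (by lia : 0 < n)
  have hsize : (n : ℝ) * (2 ^ (n / 64) + 1) * 2 ^ j₀ ≤ 2 * 2 ^ n := by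
    exact_mod_cast mul_two_pow_div_le hj hn
  have hsmall : 20 * (n * (2 ^ (n / 64) + 1)) / 2 ^ n ≤ 40 * (1 / 2 : ℝ) ^ j₀ := by
    rw [one_div, inv_pow, ← div_eq_mul_inv, div_le_div_iff₀ (by positivity) (by positivity)]
    linarith
  set M := weightedAvg T f (sieveMajorant j₀ (j₀ + k) n) (2 ^ n) x
  calc ergAvg T f N x ≤ 20 * n / 2 ^ n * ∑ p ∈ primesUpTo N, f (T^[p] x) :=
        ergAvg_le_mul_sum hf0 hN hlt hle x
    _ ≤ 20 * n / 2 ^ n *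
          (2 ^ (n / 64) + 1 + 262144 * (j₀ : ℝ) ^ 2 / n * (2 ^ n * M)) := by
        gcongr
        exact sum_primesUpTo_le_weightedAvg_sieveMajorant hf0 hf1 hj hn h hlt x
    _ = 20 * (n * (2 ^ (n / 64) + 1)) / 2 ^ n + 5242880 * (j₀ : ℝ) ^ 2 * M := by
        field_simp
        ring
    _ ≤ _ := by gcongr

lemma weightedAvg_sieveMajorant_le {d : ℕ} {s : ℝ} {x : X} (hs : 0 ≤ s)
    (hbase : weightedAvg T f 1 N x ≤ s / 3)
    (hdiff : ∀ k < d, weightedAvg T f (sieveDiff j₀ k) N x ≤ s / 3 * (1 / 2) ^ (k + 1))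
    (herror : weightedAvg T f (sieveError j₀ (j₀ + d) n) N x ≤ s / 3) :
    weightedAvg T f (sieveMajorant j₀ (j₀ + d) n) N x ≤ s := by
  have hsum : ∑ k ∈ range d, weightedAvg T f (sieveDiff j₀ k) N x ≤ s / 3 :=
    calc _ ≤ ∑ k ∈ range d, s / 6 * (1 / 2) ^ k :=
          sum_le_sum fun k hk => (hdiff k (mem_range.1 hk)).trans_eq (by ring)
      _ = s / 6 * ∑ k ∈ range d, (1 / 2) ^ k := (mul_sum _ _ _).symm
      _ ≤ s / 6 * 2 := by
          gcongr
          exact sum_geometric_two_le d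
      _ = s / 3 := by ring
  rw [weightedAvg_sieveMajorant]
  linarith

lemma exists_scale (j₀ : ℕ) {n : ℕ} (hn : n ≠ 0) :
    ∃ d, (d = 0 ∨ 512 ^ (j₀ + d) ≤ n) ∧ n < 512 ^ (j₀ + d + 1) := by
  have hlower := Nat.pow_log_le_self 512 hn
  have hupper := Nat.lt_pow_succ_log_self (by norm_num : 1 < 512) n
  rcases le_or_gt (Nat.log 512 n) j₀ with hle | hlt
  · exact ⟨0, .inl rfl, hupper.trans_le (Nat.pow_le_pow_right (by norm_num) (by lia))⟩
  · refine ⟨Nat.log 512 n - j₀, .inr ?_, ?_⟩ <;> rwa [Nat.add_sub_cancel' hlt.le]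

lemma ergAvg_le_of_weightedAvg_le (hf0 : ∀ x, 0 ≤ f x) (hf1 : ∀ x, f x ≤ 1) (hj : 8 ≤ j₀)
    {s : ℝ} (hs : (1 / 2 : ℝ) ^ j₀ ≤ s) {x : X}
    (hbase : ∀ b : ℕ, birkhoffSum T f b x ≤ s / 3 * b)
    (hdiff : ∀ k n : ℕ, 512 ^ (j₀ + k + 1) ≤ n →
      weightedAvg T f (sieveDiff j₀ k) (2 ^ n) x ≤ s / 3 * (1 / 2) ^ (k + 1))
    (herror : ∀ k n : ℕ, n < 512 ^ (j₀ + k + 1) → (k = 0 ∨ 512 ^ (j₀ + k) ≤ n) →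
      weightedAvg T f (sieveError j₀ (j₀ + k) n) (2 ^ n) x ≤ s / 3) (hN : 2 ≤ N) :
    ergAvg T f N x ≤ 10485760 * (j₀ : ℝ) ^ 2 * s := by
  have hs0 : 0 < s := lt_of_lt_of_le (by positivity) hs
  have hj' : (8 : ℝ) ≤ j₀ := by exact_mod_cast hj
  have hjs : s ≤ (j₀ : ℝ) ^ 2 * s := le_mul_of_one_le_left hs0.le (by nlinarith)
  set n := Nat.log 2 N + 1 with hn
  have hlt : N < 2 ^ n := Nat.lt_pow_succ_log_self one_lt_two N
  have hle : 2 ^ n ≤ 2 * N := by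
    rw [hn, pow_succ, mul_comm]
    exact Nat.mul_le_mul_left _ (Nat.pow_log_le_self 2 (by lia))
  have hone : weightedAvg T f 1 (2 ^ n) x ≤ s / 3 := by
    have hbirkhoff := hbase (2 ^ n)
    rw [← natCast_mul_weightedAvg_one, mul_comm] at hbirkhoff
    exact le_of_mul_le_mul_right hbirkhoff (by positivity)
  rcases le_or_gt n (1024 * j₀) with hsmall | hlarge
  · have hn' : (n : ℝ) ≤ 1024 * (j₀ : ℝ) ^ 2 := by
      have : (n : ℝ) ≤ 1024 * j₀ := by exact_mod_cast hsmall
      nlinarith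
    calc ergAvg T f N x ≤ 20 * n * weightedAvg T f 1 (2 ^ n) x :=
          ergAvg_le_weightedAvg_one hf0 hN hlt hle x
      _ ≤ 20 * n * (s / 3) := by gcongr
      _ ≤ 20 * (1024 * (j₀ : ℝ) ^ 2) * (s / 3) := by gcongr
      _ ≤ _ := by linarith
  · obtain ⟨d, hd, hnd⟩ := exists_scale j₀ (by lia : n ≠ 0)
    have hmajorant : weightedAvg T f (sieveMajorant j₀ (j₀ + d) n) (2 ^ n) x ≤ s :=
      weightedAvg_sieveMajorant_le hs0.le hone (fun k hk => hdiff k n <|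
        (Nat.pow_le_pow_right (by norm_num) (by lia)).trans (hd.resolve_left (by lia)))
        (herror d n hnd hd)
    calc ergAvg T f N x ≤ _ :=
          ergAvg_le_weightedAvg_sieveMajorant hf0 hf1 hj hlarge.le hd hN hlt hle x
      _ ≤ 40 * s + 5242880 * (j₀ : ℝ) ^ 2 * s := by gcongr
      _ ≤ _ := by linarith

lemma setOf_lt_ergAvg_subset (hf0 : ∀ x, 0 ≤ f x) (hf1 : ∀ x, f x ≤ 1) {j₀ : ℕ} (hj : 8 ≤ j₀)
    {s : ℝ} (hs : (1 / 2 : ℝ) ^ j₀ ≤ s) :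
    {x | ∃ N, 2 ≤ N ∧ 10485760 * (j₀ : ℝ) ^ 2 * s < ergAvg T f N x} ⊆
      {x | ∃ b : ℕ, s / 3 * b < birkhoffSum T f b x} ∪
      ((⋃ k, {x | ∃ n : ℕ, 512 ^ (j₀ + k + 1) ≤ n ∧
        s / 3 * (1 / 2) ^ (k + 1) < weightedAvg T f (sieveDiff j₀ k) (2 ^ n) x}) ∪
      ⋃ k, {x | ∃ n < 512 ^ (j₀ + k + 1), (k = 0 ∨ 512 ^ (j₀ + k) ≤ n) ∧
        s / 3 < weightedAvg T f (sieveError j₀ (j₀ + k) n) (2 ^ n) x}) := by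
  rintro x ⟨N, hN, hx⟩
  contrapose! hx
  simp only [Set.mem_union, Set.mem_iUnion, Set.mem_ofPred_eq, not_or, not_exists, not_and,
    not_lt] at hx
  exact ergAvg_le_of_weightedAvg_le hf0 hf1 hj hs hx.1 hx.2.1 hx.2.2 hN

end PointwiseBounds

section MaximalInequality

variable {X : Type*} [MeasurableSpace X] {μ : Measure X} {T : X → X} {f : X → ℝ}

lemma measure_iUnion_le_of_geometric {E : ℕ → Set X} {c : ℝ} (hc : 0 ≤ c)
    (h : ∀ k, μ (E k) ≤ ENNReal.ofReal (c * (1 / 2) ^ k)) :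
    μ (⋃ k, E k) ≤ ENNReal.ofReal (c * 2) := by
  refine (measure_iUnion_le E).trans ((ENNReal.tsum_le_tsum h).trans_eq ?_)
  rw [← ENNReal.ofReal_tsum_of_nonneg (fun k => by positivity)
    (summable_geometric_two.mul_left c), tsum_mul_left, tsum_geometric_two]

theorem measure_exists_lt_ergAvg_le [IsProbabilityMeasure μ] (hT : MeasurePreserving T μ μ)
    (hf : AEStronglyMeasurable f μ) (hf0 : ∀ x, 0 ≤ f x) (hf1 : ∀ x, f x ≤ 1) {j₀ : ℕ}
    (hj : 8 ≤ j₀) (hα : (1 / 2 : ℝ) ^ j₀ ≤ ∫ x, f x ∂μ) {s : ℝ} (hs : ∫ x, f x ∂μ ≤ s) :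
    μ {x | ∃ N, 2 ≤ N ∧ 10485760 * (j₀ : ℝ) ^ 2 * s < ergAvg T f N x} ≤
      ENNReal.ofReal ((3 + 9240 * l2Const) * (∫ x, f x ∂μ) / s) := by
  have habs (x : X) : |f x| ≤ 1 := (abs_of_nonneg (hf0 x)).trans_le (hf1 x)
  have hf2 : MemLp f 2 μ := .of_bound hf 1 (ae_of_all μ habs)
  have hfint : Integrable f μ := hf2.integrable one_le_two
  have hsq : ∫ x, f x ^ 2 ∂μ ≤ ∫ x, f x ∂μ :=
    integral_mono hf2.integrable_sq hfint fun x =>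
      (pow_le_of_le_one (hf0 x) (hf1 x) two_ne_zero)
  set α := ∫ x, f x ∂μ
  have hα0 : 0 < α := lt_of_lt_of_le (by positivity) hα
  have hs0 : 0 < s := hα0.trans_le hs
  have hC : 0 < l2Const := four_pos.trans_le four_le_l2Const
  have hbase := measure_exists_lt_birkhoffSum_le hT hfint hf0 (by positivity : 0 < s / 3)
  have hdiff := measure_iUnion_le_of_geometric (by positivity) fun k =>
    measure_exists_lt_weightedAvg_sieveDiff_le k hT hf2 habs hsq hj hα hs
  have herror := measure_iUnion_le_of_geometric (by positivity) fun k =>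
    measure_exists_lt_weightedAvg_sieveError_le hT hf2 hsq hj hα hs k
  refine (measure_mono (setOf_lt_ergAvg_subset hf0 hf1 hj (hα.trans hs))).trans
    ((measure_union_le _ _).trans ((add_le_add hbase
      ((measure_union_le _ _).trans (add_le_add hdiff herror))).trans_eq ?_))
  rw [← ENNReal.ofReal_add (by positivity) (by positivity),
    ← ENNReal.ofReal_add (by positivity) (by positivity)]
  congr 1
  field_simp
  ring

lemma exists_sieve_depth {α : ℝ} (h0 : 0 < α) (h1 : α ≤ 1) :
    ∃ j : ℕ, 8 ≤ j ∧ (1 / 2 : ℝ) ^ j ≤ α ∧ (j : ℝ) ^ 2 ≤ 81 * Real.log (Real.exp 1 / α) ^ 2 := by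
  have hlog : Real.log (Real.exp 1 / α) = 1 - Real.log α := by
    rw [Real.log_div (Real.exp_pos 1).ne' h0.ne', Real.log_exp]
  have hL : 1 ≤ 1 - Real.log α := by linarith [Real.log_nonpos h0.le h1]
  have hlower := Nat.le_ceil (8 * (1 - Real.log α))
  have hupper := Nat.ceil_lt_add_one (by linarith : 0 ≤ 8 * (1 - Real.log α))
  refine ⟨⌈8 * (1 - Real.log α)⌉₊, ?_, ?_, ?_⟩
  · exact_mod_cast (by linarith : (8 : ℝ) ≤ ⌈8 * (1 - Real.log α)⌉₊)
  · rw [← Real.log_le_log_iff (by positivity) h0, Real.log_pow, one_div, Real.log_inv]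
    nlinarith [Real.log_two_gt_d9]
  · rw [hlog, show (81 : ℝ) = 9 ^ 2 by norm_num, ← mul_pow]
    gcongr
    linarith

end MaximalInequality

end ErgodicPrimes

theorem stmt_3_general :
    ∃ C : ℝ, 0 < C ∧
      ∀ (X : Type u) [MeasurableSpace X] (μ : Measure X) [IsProbabilityMeasure μ] (T : X → X),
        MeasurePreserving T μ μ → ∀ f : X → ℝ, AEStronglyMeasurable f μ →
          (∀ x, 0 ≤ f x) → (∀ x, f x ≤ 1) → 0 < ∫ x, f x ∂μ → ∀ l : ℝ, 0 < l →
            ENNReal.ofReal l * μ {x | ∃ N : ℕ, 2 ≤ N ∧ l < ergAvg T f N x} ≤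
              ENNReal.ofReal
                (C * (∫ x, f x ∂μ) * Real.log (Real.exp 1 / ∫ x, f x ∂μ) ^ 2) := by
  have hC := ErgodicPrimes.four_le_l2Const
  set c := 3 + 9240 * ErgodicPrimes.l2Const
  have hc : 1 ≤ c := by linarith
  refine ⟨849346560 * c, by positivity, fun X _ μ _ T hT f hf hf0 hf1 hα0 l hl => ?_⟩
  have hα1 : ∫ x, f x ∂μ ≤ 1 := by
    simpa using integral_mono_of_nonneg (ae_of_all μ hf0) (integrable_const 1) (ae_of_all μ hf1)
  obtain ⟨j, hj, hα, hjL⟩ := ErgodicPrimes.exists_sieve_depth hα0 hα1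
  have hmax (s : ℝ) (hs : ∫ x, f x ∂μ ≤ s) :=
    ErgodicPrimes.measure_exists_lt_ergAvg_le hT hf hf0 hf1 hj hα hs
  set α := ∫ x, f x ∂μ
  set L := Real.log (Real.exp 1 / α)
  have : (0 : ℝ) < j := by exact_mod_cast (by lia : 0 < j)
  obtain ⟨s, hs⟩ : ∃ s, 10485760 * (j : ℝ) ^ 2 * s = l := ⟨_, mul_div_cancel₀ l (by positivity)⟩
  have hs0 : 0 < s := pos_of_mul_pos_right (hs ▸ hl) (by positivity)
  suffices ∃ B ≤ c * α / s, μ {x | ∃ N : ℕ, 2 ≤ N ∧ l < ergAvg T f N x} ≤ ENNReal.ofReal B by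
    obtain ⟨B, hB, hμB⟩ := this
    grw [hμB, hB, ← ENNReal.ofReal_mul hl.le]
    refine ENNReal.ofReal_le_ofReal ?_
    calc l * (c * α / s) = 10485760 * (j : ℝ) ^ 2 * (c * α) := by rw [← hs]; field_simp
      _ ≤ 10485760 * (81 * L ^ 2) * (c * α) := by gcongr
      _ = 849346560 * c * α * L ^ 2 := by ring
  rcases le_or_gt α s with hle | hlt
  · exact ⟨_, le_rfl, hs ▸ hmax s hle⟩
  · refine ⟨1, (one_le_div hs0).2 (hlt.le.trans (le_mul_of_one_le_left hα0.le hc)), ?_⟩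
    exact prob_le_one.trans_eq ENNReal.ofReal_one.symm

/-- Restricted weak type Orlicz inequality: for every probability space, measure-preserving
`T` and measurable `A` with `μ(A) > 0`,
`sup_{λ>0} λ · μ{x : sup_{N ≥ 2} 𝒜_N(𝟙_A)(x) > λ} ≤ C μ(A) log²(e/μ(A))`. -/
theorem stmt_3 :
    ∃ C : ℝ, 0 < C ∧
      ∀ (X : Type u) [MeasurableSpace X] (μ : Measure X), IsProbabilityMeasure μ →
        ∀ (T : X → X), Measurable T → MeasurePreserving T μ μ →
          ∀ (A : Set X), MeasurableSet A → 0 < μ A →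
            ∀ l : ℝ, 0 < l →
              ENNReal.ofReal l * μ {x | ∃ N : ℕ, 2 ≤ N ∧ l < ergAvg T (A.indicator 1) N x} ≤
                ENNReal.ofReal
                  (C * (μ A).toReal * (Real.log (Real.exp 1 / (μ A).toReal)) ^ 2) := by
  obtain ⟨C, hC, hmax⟩ := stmt_3_general.{u}
  refine ⟨C, hC, fun X _ μ _ T _ hT A hA hApos l hl => ?_⟩
  have hint : ∫ x, A.indicator (1 : X → ℝ) x ∂μ = (μ A).toReal := integral_indicator_one hA
  rw [← hint]
  exact hmax X μ T hT _ (measurable_one.indicator hA).aestronglyMeasurable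
    (Set.indicator_nonneg fun _ _ => zero_le_one) (Set.indicator_le_self' fun _ _ => zero_le_one)
    (hint ▸ ENNReal.toReal_pos hApos.ne' (measure_ne_top μ A)) l hl
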